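/- For every δ > 0 there exists a constant C(δ) > 0 such that for every intensity α ∈ (0,1/2] and all integers 1 ≤ r < R with ⌊(1+δ)r⌋ > r: (i) with probability at least C(δ), no loop frontier of the frontier loop soup 𝓛^b_R crosses A_{r,⌊(1+δ)r⌋}; and (ii) with probability at least C(δ), no loop of 𝓛_R crosses A_{r,⌊(1+δ)r⌋} without disconnecting B_r from ∂B_{⌊(1+δ)r⌋}. -/

import Mathlib

open MeasureTheory Set
open scoped ENNReal NNReal

noncomputable section

namespace RWLSPaper

open scoped Classical

/-- Vertices of the square lattice `ℤ²`. -/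
abbrev Lat : Type := ℤ × ℤ

/-- The plane `ℝ²`, with the Euclidean metric. -/
abbrev Plane : Type := EuclideanSpace ℝ (Fin 2)

/-- Embedding of the lattice into the plane. -/
def emb (z : Lat) : Plane := (WithLp.equiv 2 (Fin 2 → ℝ)).symm ![(z.1 : ℝ), (z.2 : ℝ)]

/-- Lattice adjacency: Euclidean distance one. -/
def Adj (a b : Lat) : Prop := (a.1 - b.1) ^ 2 + (a.2 - b.2) ^ 2 = 1

/-- ℓ∞ norm on the lattice. -/
def linf (a : Lat) : ℤ := max |a.1| |a.2|

/-- The box `B_R(z) = {w : |w - z|_∞ ≤ R}`. -/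
def box (z : Lat) (R : ℤ) : Set Lat := {w | linf (w - z) ≤ R}

/-- Inner vertex boundary of a set of vertices. -/
def bdry (A : Set Lat) : Set Lat := {z | z ∈ A ∧ ∃ w, w ∉ A ∧ linf (z - w) = 1}

/-- A set of vertices, embedded in the plane. -/
def embS (A : Set Lat) : Set Plane := emb '' A

/-- The boundary of the box `B_R(z)`, embedded in the plane. -/
def bdryE (z : Lat) (R : ℤ) : Set Plane := embS (bdry (box z R))

/-- The solid box `z + [-R,R]²` in the plane. -/
def boxP (z : Lat) (R : ℤ) : Set Plane :=
  {p | |p 0 - (z.1 : ℝ)| ≤ (R : ℝ) ∧ |p 1 - (z.2 : ℝ)| ≤ (R : ℝ)}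

/-- Trace of a list of vertices: the vertices, together with the segments joining
consecutive ones. -/
def traceL (l : List Lat) : Set Plane :=
  (⋃ z ∈ l, {emb z}) ∪ ⋃ p ∈ l.zip l.tail, segment ℝ (emb p.1) (emb p.2)

/-- Nearest-neighbour paths: nonempty lists of successively adjacent vertices. -/
def IsPath (l : List Lat) : Prop := l ≠ [] ∧ l.Chain' Adj

/-- Number of steps of a path. -/
def steps (l : List Lat) : ℕ := l.length - 1

/-- Paths from `z` to `w` with at least one step. -/
def PathsBetween (z w : Lat) : Set (List Lat) :=
  {l | IsPath l ∧ l.head? = some z ∧ l.getLast? = some w ∧ 2 ≤ l.length}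

/-- Total mass of a set of paths under the measure giving weight `4^{-|η|}` to each
path `η`. -/
def pathMass (M : Set (List Lat)) : ℝ≥0∞ :=
  ∑' l : M, (4 : ℝ≥0∞)⁻¹ ^ steps l.1

/-- `A` disconnects `B` from `C` in the plane: every continuous path joining a point
of `B` to a point of `C` meets `A`. -/
def Disconnects (A B C : Set Plane) : Prop :=
  ∀ γ : ℝ → Plane, ContinuousOn γ (Icc 0 1) → γ 0 ∈ B → γ 1 ∈ C →
    ∃ t ∈ Icc (0 : ℝ) 1, γ t ∈ A

/-- The set `M^{z,w}_{r,R}` of paths from `z` to `w` which intersect `∂B_R` and do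
not disconnect `B_r` from `∂B_R`. -/
def MSet (z w : Lat) (r R : ℤ) : Set (List Lat) :=
  {l | l ∈ PathsBetween z w ∧ (traceL l ∩ bdryE 0 R).Nonempty ∧
    ¬ Disconnects (traceL l) (embS (box 0 r)) (bdryE 0 R)}

/-- Nearest-neighbour walks from `u` to `v` staying in `D`. -/
def WalksIn (D : Set Lat) (u v : Lat) : Set (List Lat) :=
  {l | IsPath l ∧ l.head? = some u ∧ l.getLast? = some v ∧ ∀ x ∈ l, x ∈ D}

/-- The Green's function of simple random walk killed upon exiting `D`, through the
path-sum formula `G_D(u,v) = Σ_{η : u → v, η ⊆ D} 4^{-|η|}`. -/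
def green (D : Set Lat) (u v : Lat) : ℝ≥0∞ :=
  ∑' l : WalksIn D u v, (4 : ℝ≥0∞)⁻¹ ^ steps l.1

/-! ### Loops -/

/-- A rooted loop, encoded by its cyclic word: a nonempty list of vertices which,
cyclically, are successively adjacent. -/
structure RootedLoop where
  word : List Lat
  ne : word ≠ []
  adj : (word ++ word.take 1).Chain' Adj

/-- Rerooting (cyclic relabeling) relation on rooted loops. -/
def loopRot (l l' : RootedLoop) : Prop := ∃ k, l'.word = l.word.rotate k

/-- Unrooted loops: rooted loops modulo rerooting. -/
def ULoop : Type := Quot loopRot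

/-- A representative of an unrooted loop. -/
def ULoop.out (γ : ULoop) : RootedLoop := Quot.out γ

/-- Number of steps of a loop. -/
def ULoop.steps (γ : ULoop) : ℕ := γ.out.word.length

/-- Vertices visited by a loop. -/
def ULoop.verts (γ : ULoop) : Set Lat := {x | x ∈ γ.out.word}

/-- The trace of a loop in the plane. -/
def ULoop.trace (γ : ULoop) : Set Plane := traceL (γ.out.word ++ γ.out.word.take 1)

/-- The multiplicity `J(γ)`: the largest `j` such that `γ` is the concatenation of
`j` copies of a single loop. -/
def ULoop.mult (γ : ULoop) : ℕ :=
  sSup {j : ℕ | ∃ u : List Lat, u ≠ [] ∧ γ.out.word = (List.replicate j u).flatten}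

/-- The unrooted loop measure: `ν(γ) = 4^{-|γ|} / J(γ)`. -/
def loopWeight (γ : ULoop) : ℝ≥0 := (4 : ℝ≥0)⁻¹ ^ γ.steps / (γ.mult : ℝ≥0)

/-- Total `ν`-mass of a set of loops. -/
def nuMass (S : Set ULoop) : ℝ≥0∞ := ∑' γ : S, (loopWeight γ.1 : ℝ≥0∞)

/-- `ν(γ)` if `γ` is contained in `D`, and `0` otherwise. -/
def nuD (D : Set Lat) (γ : ULoop) : ℝ≥0 := if ULoop.verts γ ⊆ D then loopWeight γ else 0

/-! ### The random walk loop soup -/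

/-- Loop configurations: multiplicity functions on unrooted loops. -/
abbrev Config : Type := ULoop → ℕ

/-- The set of loops appearing in a configuration. -/
def Config.loops (ω : Config) : Set ULoop := {γ | ω γ ≠ 0}

/-- The Poisson probability mass function with mean `r`. -/
def poissonProb (r : ℝ≥0) (k : ℕ) : ℝ≥0∞ :=
  ENNReal.ofReal (Real.exp (-(r : ℝ)) * (r : ℝ) ^ k / k.factorial)

/-- `P` is the law of the random walk loop soup in `D` with intensity `α`: a Poisson
point process with intensity `α·ν` restricted to loops contained in `D`; equivalently,
the multiplicities of the various loops are independent, the multiplicity of a loop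
`γ ⊆ D` being Poisson-distributed with mean `α ν(γ)`. -/
def IsLoopSoup (D : Set Lat) (α : ℝ) (P : Measure Config) : Prop :=
  IsProbabilityMeasure P ∧
  ∀ (s : Finset ULoop) (m : ULoop → ℕ),
    P {ω | ∀ γ ∈ s, ω γ = m γ} = ∏ γ ∈ s, poissonProb (α.toNNReal * nuD D γ) (m γ)

/-- Decreasing events of the loop soup. -/
def DecreasingEvent (E : Set Config) : Prop :=
  ∀ ω ω' : Config, (∀ γ, ω' γ ≤ ω γ) → ω ∈ E → ω' ∈ E

/-! ### Clusters -/

/-- Two loops are adjacent when they intersect. -/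
def Touches (γ γ' : ULoop) : Prop := (ULoop.verts γ ∩ ULoop.verts γ').Nonempty

/-- Connection of loops within a family `L` of loops: transitive closure of adjacency. -/
def linkedL (L : Set ULoop) : ULoop → ULoop → Prop :=
  Relation.ReflTransGen (fun a b => a ∈ L ∧ b ∈ L ∧ Touches a b)

/-- The cluster of `γ` in `L`, as a set of loops. -/
def clusterClass (L : Set ULoop) (γ : ULoop) : Set ULoop := {γ' | γ' ∈ L ∧ linkedL L γ γ'}

/-- The subset of the plane covered by a family of loops. -/
def classTrace (K : Set ULoop) : Set Plane := ⋃ γ ∈ K, ULoop.trace γ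

/-- The clusters of a loop configuration, regarded as subsets of the plane. -/
def clusters (L : Set ULoop) : Set (Set Plane) :=
  {C | ∃ γ ∈ L, C = classTrace (clusterClass L γ)}

/-- `Λ(A, L)`: the union of `A` with all the clusters of `L` meeting `A`. -/
def LamL (A : Set Plane) (L : Set ULoop) : Set Plane :=
  A ∪ ⋃ C ∈ {C | C ∈ clusters L ∧ (C ∩ A).Nonempty}, C

/-- Connection within an arbitrary family of subsets of the plane (two members being
adjacent when they intersect). -/
def linkedS (F : Set (Set Plane)) : Set Plane → Set Plane → Prop :=
  Relation.ReflTransGen (fun a b => a ∈ F ∧ b ∈ F ∧ (a ∩ b).Nonempty)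

/-- Clusters of a family of subsets of the plane. -/
def clustersS (F : Set (Set Plane)) : Set (Set Plane) :=
  {C | ∃ S ∈ F, C = ⋃ S' ∈ {S' | S' ∈ F ∧ linkedS F S S'}, S'}

/-- `Λ(A, F)` for a family `F` of subsets of the plane. -/
def LamS (A : Set Plane) (F : Set (Set Plane)) : Set Plane :=
  A ∪ ⋃ C ∈ {C | C ∈ clustersS F ∧ (C ∩ A).Nonempty}, C

/-- The traces of a family of loops. -/
def traces (L : Set ULoop) : Set (Set Plane) := ULoop.trace '' L

/-! ### Filling, frontier, outermost clusters, crossings -/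

/-- The filling of a set: the complement of the union of all unbounded connected
subsets of the complement of its closure. -/
def Fill (A : Set Plane) : Set Plane :=
  {x | ∀ C : Set Plane, C ⊆ (closure A)ᶜ → IsConnected C → x ∈ C → Bornology.IsBounded C}

/-- The frontier of a loop: the topological boundary of the filling of its trace. -/
def loopFrontier (γ : ULoop) : Set Plane := frontier (Fill (ULoop.trace γ))

/-- The frontiers of the loops of a family. -/
def frontiers (L : Set ULoop) : Set (Set Plane) := loopFrontier '' L

/-- An outermost cluster of `L`. -/
def Outermost (L : Set ULoop) (C : Set Plane) : Prop :=
  C ∈ clusters L ∧ ∀ C' ∈ clusters L, C' ≠ C → ¬ Fill C ⊆ Fill C'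

/-- `S` crosses the annulus `A_{r,R}(z)`: it meets both `∂B_r(z)` and `∂B_R(z)`. -/
def CrossesAnn (S : Set Plane) (z : Lat) (r R : ℤ) : Prop :=
  (S ∩ bdryE z r).Nonempty ∧ (S ∩ bdryE z R).Nonempty

/-! ### Arm events -/

/-- The four-arm event: at least two distinct outermost clusters cross `A_{l,d}(z)`. -/
def fourArm (z : Lat) (l d : ℤ) (L : Set ULoop) : Prop :=
  ∃ C1 C2 : Set Plane, Outermost L C1 ∧ Outermost L C2 ∧ C1 ≠ C2 ∧
    CrossesAnn C1 z l d ∧ CrossesAnn C2 z l d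

/-- The four-arm event, as a set of configurations. -/
def A4 (z : Lat) (l d : ℤ) : Set Config := {ω | fourArm z l d ω.loops}

/-- The truncated four-arm event `→𝒜(z;l,d)`. -/
def A4trunc (z : Lat) (l d : ℤ) : Set Config :=
  {ω | fourArm z l d ω.loops ∧ LamL (embS (box z l)) ω.loops ⊆ boxP z (2 * d)}

/-- The truncated inward four-arm event `←𝒜(z;l,d)`. -/
def A4in (z : Lat) (l d : ℤ) : Set Config :=
  {ω | fourArm z l d ω.loops ∧
    LamL (embS (bdry (box z d))) ω.loops ∩ embS (box z (l / 2)) = ∅}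

/-- Lattice points in the open upper half-plane `ℍ`. -/
def upperLat : Set Lat := {w | 0 < w.2}

/-- The upper part of the boundary of `B_R`, embedded in the plane. -/
def bdryEP (R : ℤ) : Set Plane := embS (bdry (box 0 R) ∩ upperLat)

/-- `S` crosses the half-annulus `A^+_{r,R}`. -/
def CrossesAnnP (S : Set Plane) (r R : ℤ) : Prop :=
  (S ∩ bdryEP r).Nonempty ∧ (S ∩ bdryEP R).Nonempty

/-- The interior two-arm event: some outermost cluster has a frontier crossing `A_{l,d}`. -/
def A2 (l d : ℤ) : Set Config :=
  {ω | ∃ C, Outermost ω.loops C ∧ CrossesAnn (frontier (Fill C)) 0 l d}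

/-- The boundary two-arm event. -/
def A2P (l d : ℤ) : Set Config :=
  {ω | ∃ C, Outermost ω.loops C ∧ CrossesAnnP (frontier (Fill C)) l d}

/-- The boundary four-arm event. -/
def A4P (l d : ℤ) : Set Config :=
  {ω | ∃ C1 C2, Outermost ω.loops C1 ∧ Outermost ω.loops C2 ∧ C1 ≠ C2 ∧
    CrossesAnnP C1 l d ∧ CrossesAnnP C2 l d}

/-- Outward truncation condition: `Λ(B_l, ·) ⊆ B_{2d}`. -/
def TruncOut (l d : ℤ) (ω : Config) : Prop :=
  LamL (embS (box 0 l)) ω.loops ⊆ boxP 0 (2 * d)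

/-- Inward truncation condition: `Λ(∂B_d, ·) ∩ B_{⌊l/2⌋} = ∅`. -/
def TruncIn (l d : ℤ) (ω : Config) : Prop :=
  LamL (embS (bdry (box 0 d))) ω.loops ∩ embS (box 0 (l / 2)) = ∅

/-! ### Random walks and qualities -/

/-- `μ` is the law of the simple random walk on `ℤ²` started at `z`, as a measure on
`ℕ → ℤ²`. -/
def IsSRW (z : Lat) (μ : Measure (ℕ → Lat)) : Prop :=
  IsProbabilityMeasure μ ∧
  ∀ (n : ℕ) (f : ℕ → Lat), f 0 = z → (∀ i < n, Adj (f i) (f (i + 1))) →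
    μ {w | ∀ i ≤ n, w i = f i} = (4 : ℝ≥0∞)⁻¹ ^ n

/-- First hitting time of a set of vertices by a walk. -/
def hitTime (w : ℕ → Lat) (A : Set Lat) : ℕ := sInf {i | w i ∈ A}

/-- Position of a walk at its first hitting of `A`. -/
def hitPt (w : ℕ → Lat) (A : Set Lat) : Lat := w (hitTime w A)

/-- Trace of a walk, stopped at its first hitting of `A`. -/
def stoppedTrace (w : ℕ → Lat) (A : Set Lat) : Set Plane :=
  traceL ((List.range (hitTime w A + 1)).map w)

/-- The walk stays in `D` up to its first hitting of `A`. -/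
def StaysIn (w : ℕ → Lat) (D A : Set Lat) : Prop := ∀ i ≤ hitTime w A, w i ∈ D

/-- `μ` is the law of the simple random walk started at `z`, conditioned to stay in
`D` until it first hits `A`. -/
def IsCondSRW (z : Lat) (D A : Set Lat) (μ : Measure (ℕ → Lat)) : Prop :=
  ∃ ν : Measure (ℕ → Lat), IsSRW z ν ∧
    μ = (ν {w | StaysIn w D A})⁻¹ • ν.restrict {w | StaysIn w D A}

/-- Lattice ball of real radius (ℓ∞ distance). -/
def ballV (c : Lat) (ρ : ℝ) : Set Lat := {w | ((linf (w - c) : ℤ) : ℝ) ≤ ρ}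

/-- Union of the stopped traces of a packet of walks. -/
def packTrace {j : ℕ} (ws : Fin j → ℕ → Lat) (A : Set Lat) : Set Plane :=
  ⋃ i, stoppedTrace (ws i) A

/-- Union of the balls of radius `ρ` around the hitting points of a packet of walks. -/
def packBalls {j : ℕ} (ws : Fin j → ℕ → Lat) (A : Set Lat) (ρ : ℝ) : Set Plane :=
  ⋃ i, embS (ballV (hitPt (ws i) A) ρ)

/-- The frontiers of the loops of `ω` not contained in `B_r`. -/
def outerFrontiers (r : ℤ) (ω : Config) : Set (Set Plane) :=
  frontiers {γ | γ ∈ ω.loops ∧ ¬ ULoop.verts γ ⊆ box 0 r}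

/-- The frontiers of the loops of `ω` meeting `B_R`. -/
def meetFrontiers (R : ℤ) (ω : Config) : Set (Set Plane) :=
  frontiers {γ | γ ∈ ω.loops ∧ (ULoop.verts γ ∩ box 0 R).Nonempty}

/-- Quality at scale `s` for two packets of walks inside a loop soup, with initial
configuration `(Lr, V1, V2)` at scale `r`. -/
def qualityJK (Lr : Set ULoop) (V1 V2 : Set Lat) (r : ℤ) {j k : ℕ}
    (w1 : Fin j → ℕ → Lat) (w2 : Fin k → ℕ → Lat) (ω : Config) (s : ℤ) : ℝ :=
  sSup {δ : ℝ | 0 ≤ δ ∧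
    LamS (embS V1 ∪ packTrace w1 (bdry (box 0 s)) ∪ packBalls w1 (bdry (box 0 s)) (δ * (s : ℝ)))
        (traces Lr ∪ outerFrontiers r ω) ∩
      (embS V2 ∪ packTrace w2 (bdry (box 0 s)) ∪
        packBalls w2 (bdry (box 0 s)) (δ * (s : ℝ))) = ∅}

/-- Quality at scale `s` for a single pair of walks. -/
def qualityPair (Lr : Set ULoop) (V1 V2 : Set Lat) (r : ℤ)
    (w1 w2 : ℕ → Lat) (ω : Config) (s : ℤ) : ℝ :=
  qualityJK Lr V1 V2 r (fun _ : Fin 1 => w1) (fun _ : Fin 1 => w2) ω s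

/-- Reversed quality at scale `s`, for two packets walking inward from `∂B_R`. -/
def qualityRev (L : Set ULoop) (V1 V2 : Set Lat) (R : ℤ) {j k : ℕ}
    (w1 : Fin j → ℕ → Lat) (w2 : Fin k → ℕ → Lat) (ω : Config) (s : ℤ) : ℝ :=
  sSup {δ : ℝ | 0 ≤ δ ∧
    LamS (embS V1 ∪ packTrace w1 (bdry (box 0 s)) ∪ packBalls w1 (bdry (box 0 s)) (δ * (s : ℝ)))
        (traces L ∪ meetFrontiers R ω) ∩
      (embS V2 ∪ packTrace w2 (bdry (box 0 s)) ∪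
        packBalls w2 (bdry (box 0 s)) (δ * (s : ℝ))) = ∅}

/-- Quality at scale `s` for one packet of walks, with non-disconnection of `U`. -/
def qualityDisc (Lr : Set ULoop) (U : Set Lat) (r : ℤ) {j : ℕ}
    (ws : Fin j → ℕ → Lat) (ω : Config) (s : ℤ) : ℝ :=
  sSup {δ : ℝ | 0 ≤ δ ∧
    embS U ∩ Fill (LamS
      (packTrace ws (bdry (box 0 s)) ∪ packBalls ws (bdry (box 0 s)) (δ * (s : ℝ)))
      (traces Lr ∪ outerFrontiers r ω)) = ∅}

/-! ### Crossing loops and bad clusters -/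

/-- Crossing loops: loops contained in `D` which cross `A_{d,k}` without
disconnecting `B_d` from `∂B_k`. -/
def crossingLoops (D : Set Lat) (d k : ℤ) : Set ULoop :=
  {γ | ULoop.verts γ ⊆ D ∧ CrossesAnn (ULoop.trace γ) 0 d k ∧
    ¬ Disconnects (ULoop.trace γ) (embS (box 0 d)) (bdryE 0 k)}

/-- `K` is a bad cluster of `L` for the annulus `A_{l,d}`, relative to the set `CL` of
crossing loops: an outermost cluster crossing `A_{l,d}` which no longer crosses it
once its crossing loops are removed. -/
def IsBad (CL : Set ULoop) (l d : ℤ) (L : Set ULoop) (K : Set ULoop) : Prop :=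
  (∃ γ ∈ L, K = clusterClass L γ) ∧
  Outermost L (classTrace K) ∧ CrossesAnn (classTrace K) 0 l d ∧
  ¬ CrossesAnn (classTrace (K \ CL)) 0 l d

/-- `E_1`: the four-arm event holds, with exactly one bad cluster. -/
def E1 (CL : Set ULoop) (l d : ℤ) : Set Config :=
  {ω | fourArm 0 l d ω.loops ∧ ∃! K : Set ULoop, IsBad CL l d ω.loops K}

/-- `E_2`: the four-arm event holds, with at least two bad clusters. -/
def E2 (CL : Set ULoop) (l d : ℤ) : Set Config :=
  {ω | fourArm 0 l d ω.loops ∧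
    ∃ K K' : Set ULoop, K ≠ K' ∧ IsBad CL l d ω.loops K ∧ IsBad CL l d ω.loops K'}

/-- Number of crossing loops of a configuration, counted with multiplicity. -/
def crossingCount (CL : Set ULoop) (ω : Config) : ℝ≥0∞ := ∑' γ : CL, (ω γ.1 : ℝ≥0∞)

/-! ### Arcs of the square -/

/-- The square curve `{‖p‖_∞ = n}`: the closed polygonal curve through `∂B_n`. -/
def sqCurve (n : ℤ) : Set Plane := {p | max |p 0| |p 1| = (n : ℝ)}

/-- `J` is one of the two arcs of the closed curve `∂B_n` with endpoints `x` and `y`. -/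
def IsArc (n : ℤ) (x y : Lat) (J : Set Plane) : Prop :=
  IsClosed J ∧ IsConnected J ∧ J ⊆ sqCurve n ∧ emb x ∈ J ∧ emb y ∈ J ∧
  IsConnected ((sqCurve n \ J) ∪ {emb x, emb y})

/-! ### Step sequences -/

/-- The four lattice directions. -/
abbrev Dir : Type := Fin 4

/-- The unit vector of a direction. -/
def vec : Dir → Lat := ![(1, 0), (0, 1), (-1, 0), (0, -1)]

/-- Total displacement of a list of steps. -/
def disp (m : List Dir) : Lat := (m.map vec).sum

@[simp] lemma disp_nil : disp [] = 0 := rfl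

@[simp] lemma disp_cons (d : Dir) (m : List Dir) : disp (d :: m) = vec d + disp m := by
  simp [disp]

@[simp] lemma disp_append (a b : List Dir) : disp (a ++ b) = disp a + disp b := by
  simp [disp]

/-- Mass of a set of step sequences. -/
def W (M : Set (List Dir)) : ℝ≥0∞ := ∑' m : M, (4 : ℝ≥0∞)⁻¹ ^ m.1.length

lemma W_mono {M N : Set (List Dir)} (h : M ⊆ N) : W M ≤ W N :=
  ENNReal.tsum_mono_subtype (fun m : List Dir => (4 : ℝ≥0∞)⁻¹ ^ m.length) h

lemma W_union_le (M N : Set (List Dir)) : W (M ∪ N) ≤ W M + W N :=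
  ENNReal.tsum_union_le (fun m : List Dir => (4 : ℝ≥0∞)⁻¹ ^ m.length) M N

lemma W_union_disj {M N : Set (List Dir)} (h : Disjoint M N) : W (M ∪ N) = W M + W N :=
  ENNReal.summable.tsum_union_disjoint (f := fun m : List Dir => (4 : ℝ≥0∞)⁻¹ ^ m.length)
    h ENNReal.summable

lemma W_iUnion_le {ι : Type*} (M : ι → Set (List Dir)) : W (⋃ i, M i) ≤ ∑' i, W (M i) :=
  ENNReal.tsum_iUnion_le_tsum (fun m : List Dir => (4 : ℝ≥0∞)⁻¹ ^ m.length) M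

@[simp] lemma W_empty : W ∅ = 0 := by simp [W]

lemma W_nil : W {[]} = 1 := by
  unfold W
  rw [tsum_singleton ([] : List Dir) (fun m : List Dir => (4 : ℝ≥0∞)⁻¹ ^ m.length)]
  simp

/-- Concatenations `a ++ b`, `a ∈ A`, `b ∈ B a`. -/
def bindS (A : Set (List Dir)) (B : List Dir → Set (List Dir)) : Set (List Dir) :=
  {m | ∃ a ∈ A, ∃ b ∈ B a, m = a ++ b}

lemma W_sigma (A : Set (List Dir)) (B : List Dir → Set (List Dir)) :
    ∑' x : (Σ a : A, B a.1), (4 : ℝ≥0∞)⁻¹ ^ (x.1.1 ++ x.2.1).length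
      = ∑' a : A, (4 : ℝ≥0∞)⁻¹ ^ a.1.length * W (B a.1) := by
  rw [ENNReal.tsum_sigma']
  refine tsum_congr fun a => ?_
  rw [W, ← ENNReal.tsum_mul_left]
  refine tsum_congr fun b => ?_
  simp [pow_add]

lemma W_bind_le {A : Set (List Dir)} {B : List Dir → Set (List Dir)} {c : ℝ≥0∞}
    (h : ∀ a ∈ A, W (B a) ≤ c) : W (bindS A B) ≤ W A * c := by
  have h1 : W (bindS A B) ≤
      ∑' x : (Σ a : A, B a.1), (4 : ℝ≥0∞)⁻¹ ^ (x.1.1 ++ x.2.1).length := by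
    let f : (Σ a : A, B a.1) → bindS A B := fun x =>
      ⟨x.1.1 ++ x.2.1, x.1.1, x.1.2, x.2.1, x.2.2, rfl⟩
    have hf : Function.Surjective f := by
      rintro ⟨m, a, ha, b, hb, rfl⟩
      exact ⟨⟨⟨a, ha⟩, ⟨b, hb⟩⟩, rfl⟩
    exact ENNReal.tsum_le_tsum_comp_of_surjective hf
      (fun m : bindS A B => (4 : ℝ≥0∞)⁻¹ ^ m.1.length)
  refine h1.trans ?_
  rw [W_sigma, W, ← ENNReal.tsum_mul_right]
  exact ENNReal.tsum_le_tsum fun a => by gcongr; exact h a.1 a.2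

/-- Prefix-free sets. -/
def PF (M : Set (List Dir)) : Prop := ∀ a ∈ M, ∀ b ∈ M, a <+: b → a = b

lemma W_bind_ge {A : Set (List Dir)} {B : List Dir → Set (List Dir)} {c : ℝ≥0∞}
    (hA : PF A) (h : ∀ a ∈ A, c ≤ W (B a)) : W A * c ≤ W (bindS A B) := by
  have h1 : ∑' x : (Σ a : A, B a.1), (4 : ℝ≥0∞)⁻¹ ^ (x.1.1 ++ x.2.1).length
      ≤ W (bindS A B) := by
    let f : (Σ a : A, B a.1) → bindS A B := fun x =>
      ⟨x.1.1 ++ x.2.1, x.1.1, x.1.2, x.2.1, x.2.2, rfl⟩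
    have hf : Function.Injective f := by
      rintro ⟨⟨a, ha⟩, ⟨b, hb⟩⟩ ⟨⟨a', ha'⟩, ⟨b', hb'⟩⟩ h
      have h2 : a ++ b = a' ++ b' := congrArg Subtype.val h
      have h3 : a = a' := by
        rcases List.prefix_or_prefix_of_prefix (List.prefix_append a b)
          (h2 ▸ List.prefix_append a' b') with h | h
        · exact hA _ ha _ ha' h
        · exact (hA _ ha' _ ha h).symm
      subst h3
      have h4 : b = b' := by simpa using h2
      subst h4
      rfl
    exact ENNReal.tsum_comp_le_tsum_of_injective hf
      (fun m : bindS A B => (4 : ℝ≥0∞)⁻¹ ^ m.1.length)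
  refine le_trans ?_ h1
  rw [W_sigma, W, ← ENNReal.tsum_mul_right]
  exact ENNReal.tsum_le_tsum fun a => by gcongr; exact h a.1 a.2

lemma PF_bind {A : Set (List Dir)} {B : List Dir → Set (List Dir)}
    (hA : PF A) (hB : ∀ a ∈ A, PF (B a)) : PF (bindS A B) := by
  rintro _ ⟨a, ha, b, hb, rfl⟩ _ ⟨a', ha', b', hb', rfl⟩ h
  have h3 : a = a' := by
    rcases List.prefix_or_prefix_of_prefix ((List.prefix_append a b).trans h)
      (List.prefix_append a' b') with h | h
    · exact hA _ ha _ ha' h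
    · exact (hA _ ha' _ ha h).symm
  subst h3
  rw [List.prefix_append_right_inj] at h
  rw [hB a ha _ hb _ hb' h]

lemma W_cons (M : Set (List Dir)) :
    W M = (if [] ∈ M then 1 else 0) + 4⁻¹ * ∑ d : Dir, W {m | d :: m ∈ M} := by
  let e : Unit ⊕ (Dir × List Dir) ≃ List Dir :=
    { toFun := fun x => match x with
        | Sum.inl _ => []
        | Sum.inr (d, m) => d :: m
      invFun := fun m => match m with
        | [] => Sum.inl ()
        | d :: m => Sum.inr (d, m)
      left_inv := by rintro (x | ⟨d, m⟩) <;> rfl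
      right_inv := by rintro (_ | ⟨d, m⟩) <;> rfl }
  have key : ∀ N : Set (List Dir),
      W N = ∑' m : List Dir, N.indicator (fun m => (4 : ℝ≥0∞)⁻¹ ^ m.length) m := fun N =>
    tsum_subtype N (fun m : List Dir => (4 : ℝ≥0∞)⁻¹ ^ m.length)
  rw [key M, ← e.tsum_eq, Summable.tsum_sum ENNReal.summable ENNReal.summable]
  congr 1
  · simp [e, Set.indicator]
  · rw [ENNReal.tsum_prod', tsum_fintype, Finset.mul_sum]
    refine Finset.sum_congr rfl fun d _ => ?_
    rw [key, ← ENNReal.tsum_mul_left]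
    refine tsum_congr fun m => ?_
    by_cases h : d :: m ∈ M
    · simp [e, Set.indicator, h, pow_succ, mul_comm]
    · simp [e, Set.indicator, h]

lemma four_inv_mul (c : ℝ≥0∞) : (4 : ℝ≥0∞)⁻¹ * ∑ _d : Dir, c = c := by
  simp only [Finset.sum_const, Finset.card_univ, Fintype.card_fin, nsmul_eq_mul]
  rw [← mul_assoc]
  norm_num
  rw [ENNReal.inv_mul_cancel (by norm_num) (by norm_num), one_mul]

lemma kraft_aux (n : ℕ) : ∀ M : Set (List Dir), PF M →
    W {m | m ∈ M ∧ m.length ≤ n} ≤ 1 := by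
  have hnil : ∀ (n : ℕ) (M : Set (List Dir)), PF M → [] ∈ M →
      W {m | m ∈ M ∧ m.length ≤ n} ≤ 1 := by
    intro n M hM h
    rw [← W_nil]
    refine W_mono ?_
    rintro m ⟨hm, -⟩
    exact (hM _ h _ hm List.nil_prefix).symm
  induction n with
  | zero =>
    intro M hM
    by_cases h : [] ∈ M
    · exact hnil 0 M hM h
    · have : {m | m ∈ M ∧ m.length ≤ 0} = ∅ := by
        ext m
        simp only [Set.mem_ofPred_eq, mem_empty_iff_false, iff_false, not_and]
        rintro hm hl
        simp at hl
        exact h (hl ▸ hm)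
      rw [this]; simp
  | succ n ih =>
    intro M hM
    by_cases h : [] ∈ M
    · exact hnil _ M hM h
    · rw [W_cons]
      simp only [Set.mem_ofPred_eq, h, false_and, if_false, zero_add]
      calc (4 : ℝ≥0∞)⁻¹ * ∑ d : Dir, W {m | d :: m ∈ M ∧ (d :: m).length ≤ n + 1}
          ≤ 4⁻¹ * ∑ d : Dir, 1 := by
            gcongr with d _
            refine le_trans (W_mono ?_) (ih {m | d :: m ∈ M} ?_)
            · rintro m ⟨h1, h2⟩
              exact ⟨h1, by simpa using h2⟩
            · intro a ha b hb hab
              have := hM _ ha _ hb (by simpa using hab)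
              simpa using this
        _ = 1 := four_inv_mul 1

lemma W_le_of_trunc {M : Set (List Dir)} {c : ℝ≥0∞}
    (h : ∀ n, W {m | m ∈ M ∧ m.length ≤ n} ≤ c) : W M ≤ c := by
  unfold W
  rw [ENNReal.tsum_eq_iSup_sum]
  refine iSup_le fun s => ?_
  refine le_trans ?_ (h (s.sup fun m => m.1.length))
  have hs : ∀ m ∈ s, m.1.length ≤ s.sup fun m => m.1.length :=
    fun m hm => Finset.le_sup (f := fun m : M => m.1.length) hm
  set n := s.sup fun m => m.1.length
  rw [← Finset.tsum_subtype]
  let f : s → {m | m ∈ M ∧ m.length ≤ n} := fun m => ⟨m.1.1, m.1.2, hs _ m.2⟩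
  have hf : Function.Injective f := by
    rintro ⟨⟨a, ha⟩, ha'⟩ ⟨⟨b, hb⟩, hb'⟩ h
    have : a = b := congrArg Subtype.val h
    subst this; rfl
  exact ENNReal.tsum_comp_le_tsum_of_injective hf
    (fun m : {m | m ∈ M ∧ m.length ≤ n} => (4 : ℝ≥0∞)⁻¹ ^ m.1.length)

/-- Kraft's inequality. -/
lemma kraft {M : Set (List Dir)} (hM : PF M) : W M ≤ 1 :=
  W_le_of_trunc fun n => kraft_aux n M hM

lemma W_map (e : Dir ≃ Dir) (M : Set (List Dir)) : W {m | m.map e ∈ M} = W M := by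
  let E : {m : List Dir | m.map e ∈ M} ≃ M :=
    (Equiv.listEquivOfEquiv e).subtypeEquiv (fun m => by
      simp [Equiv.listEquivOfEquiv])
  unfold W
  rw [← E.tsum_eq]
  refine tsum_congr fun m => ?_
  simp [E, Equiv.listEquivOfEquiv]

/-- `Q` can be reached with mass at least `p`, along a prefix-free family. -/
def Reach (Q : List Dir → Prop) (p : ℝ≥0∞) : Prop :=
  ∃ M : Set (List Dir), PF M ∧ p ≤ W M ∧ ∀ m ∈ M, Q m

lemma Reach.mono {Q Q' : List Dir → Prop} {p p' : ℝ≥0∞} (h : Reach Q p) (hp : p' ≤ p)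
    (hQ : ∀ m, Q m → Q' m) : Reach Q' p' := by
  obtain ⟨M, h1, h2, h3⟩ := h
  exact ⟨M, h1, hp.trans h2, fun m hm => hQ m (h3 m hm)⟩

lemma Reach.nil {Q : List Dir → Prop} (h : Q []) : Reach Q 1 :=
  ⟨{[]}, by rintro a rfl b rfl _; rfl, W_nil.ge, by rintro m rfl; exact h⟩

lemma Reach.comp {Q Q' : List Dir → Prop} {p p' : ℝ≥0∞} (h : Reach Q p)
    (h' : ∀ a, Q a → Reach (fun b => Q' (a ++ b)) p') : Reach Q' (p * p') := by
  obtain ⟨M, h1, h2, h3⟩ := h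
  choose! B hB using h'
  refine ⟨bindS M B, PF_bind h1 fun a ha => (hB a (h3 a ha)).1, ?_, ?_⟩
  · refine le_trans ?_ (W_bind_ge h1 fun a ha => (hB a (h3 a ha)).2.1)
    gcongr
  · rintro _ ⟨a, ha, b, hb, rfl⟩
    exact (hB a (h3 a ha)).2.2 b hb

lemma Reach.map {Q : List Dir → Prop} {p : ℝ≥0∞} (h : Reach Q p) (e : Dir ≃ Dir) :
    Reach (fun m => Q (m.map e)) p := by
  obtain ⟨M, h1, h2, h3⟩ := h
  refine ⟨{m | m.map e ∈ M}, ?_, ?_, fun m hm => h3 _ hm⟩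
  · intro a ha b hb hab
    have := h1 _ ha _ hb (hab.map e)
    exact (List.map_injective_iff.2 e.injective) this
  · rwa [W_map]

/-! ### Symmetries and paths -/

/-- Rotation by a multiple of a quarter turn. -/
def rotL (k : Dir) (z : Lat) : Lat := ![z, (-z.2, z.1), (-z.1, -z.2), (z.2, -z.1)] k

/-- Rotation, acting on directions. -/
def rotE (k : Dir) : Dir ≃ Dir := Equiv.addRight k

/-- Reflection `(x,y) ↦ (x,-y)`. -/
def conjL (z : Lat) : Lat := (z.1, -z.2)

/-- Reflection acting on directions. -/
def conjE : Dir ≃ Dir := Equiv.neg Dir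

lemma vec_rotE (k d : Dir) : vec (rotE k d) = rotL k (vec d) := by
  fin_cases k <;> fin_cases d <;> rfl

lemma vec_conjE (d : Dir) : vec (conjE d) = conjL (vec d) := by
  fin_cases d <;> rfl

lemma rotL_add (k : Dir) (z w : Lat) : rotL k (z + w) = rotL k z + rotL k w := by
  fin_cases k <;> simp [rotL, Prod.ext_iff] <;> ring_nf <;> simp

lemma rotL_zero (k : Dir) : rotL k 0 = 0 := by
  fin_cases k <;> rfl

lemma conjL_add (z w : Lat) : conjL (z + w) = conjL z + conjL w := by
  simp [conjL, Prod.ext_iff]; ring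

lemma disp_map_rot (k : Dir) (m : List Dir) : disp (m.map (rotE k)) = rotL k (disp m) := by
  induction m with
  | nil => simp [rotL_zero]
  | cons d m ih => simp [ih, rotL_add, vec_rotE]

lemma disp_map_conj (m : List Dir) : disp (m.map conjE) = conjL (disp m) := by
  induction m with
  | nil => rfl
  | cons d m ih => simp [ih, conjL_add, vec_conjE]

lemma linf_rotL (k : Dir) (z : Lat) : linf (rotL k z) = linf z := by
  fin_cases k <;> simp [rotL, linf, max_comm]

lemma linf_conjL (z : Lat) : linf (conjL z) = linf z := by
  simp [conjL, linf]

/-- All vertices visited satisfy `P`. -/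
def Pth (P : Lat → Prop) (m : List Dir) : Prop := ∀ u, u <+: m → P (disp u)

lemma Pth.mono {P Q : Lat → Prop} {m : List Dir} (h : Pth P m) (hPQ : ∀ z, P z → Q z) :
    Pth Q m := fun u hu => hPQ _ (h u hu)

lemma Pth.append {P : Lat → Prop} {a b : List Dir} (ha : Pth P a)
    (hb : Pth (fun z => P (disp a + z)) b) : Pth P (a ++ b) := by
  intro u hu
  rcases List.prefix_or_prefix_of_prefix hu (List.prefix_append a b) with h | ⟨v, rfl⟩
  · exact ha u h
  · rw [List.prefix_append_right_inj] at hu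
    simpa using hb v hu

lemma prefix_map_exists {f : Dir → Dir} {u m : List Dir} (h : u <+: m.map f) :
    ∃ v, v <+: m ∧ u = v.map f := by
  rw [List.prefix_iff_eq_take] at h
  refine ⟨m.take u.length, List.take_prefix _ _, ?_⟩
  rw [← List.map_take] at h
  exact h

lemma Pth.of_map_rot {P : Lat → Prop} {k : Dir} {m : List Dir} (h : Pth P (m.map (rotE k))) :
    Pth (fun z => P (rotL k z)) m := by
  intro u hu
  rw [← disp_map_rot]
  exact h _ (hu.map _)

lemma Pth.of_map_conj {P : Lat → Prop} {m : List Dir} (h : Pth P (m.map conjE)) :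
    Pth (fun z => P (conjL z)) m := by
  intro u hu
  rw [← disp_map_conj]
  exact h _ (hu.map _)

/-! ### Exit from a square -/

/-- Paths from `z` stopped at the first vertex in `H`. -/
def Hit (H : Set Lat) (z : Lat) : Set (List Dir) :=
  {m | z + disp m ∈ H ∧ ∀ u, u <+: m → u ≠ m → z + disp u ∉ H}

lemma PF_Hit (H : Set Lat) (z : Lat) : PF (Hit H z) := by
  intro a ha b hb hab
  by_contra hne
  exact hb.2 a hab hne ha.1

lemma W_Hit_le (H : Set Lat) (z : Lat) : W (Hit H z) ≤ 1 := kraft (PF_Hit H z)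

lemma Hit_of_mem {H : Set Lat} {z : Lat} (hz : z ∈ H) : Hit H z = {[]} := by
  ext m
  constructor
  · intro hm
    by_contra hne
    exact hm.2 [] List.nil_prefix (fun h => hne h.symm) (by simpa using hz)
  · rintro rfl
    exact ⟨by simpa using hz, fun u hu hne => absurd (List.prefix_nil.1 hu) hne⟩

lemma Hit_cons {H : Set Lat} {z : Lat} (hz : z ∉ H) (d : Dir) :
    {m | d :: m ∈ Hit H z} = Hit H (z + vec d) := by
  ext m
  simp only [Hit, Set.mem_ofPred_eq, disp_cons, ← add_assoc]
  refine and_congr Iff.rfl ⟨fun h u hu hne => ?_, fun h u hu hne => ?_⟩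
  · have := h (d :: u) (by simpa using hu) (by simpa using hne)
    simpa [← add_assoc] using this
  · cases u with
    | nil => simpa using hz
    | cons d' u =>
      rw [List.cons_prefix_cons] at hu
      obtain ⟨rfl, hu⟩ := hu
      have := h u hu (by simpa using hne)
      simpa [← add_assoc] using this

lemma W_Hit_step {H : Set Lat} {z : Lat} (hz : z ∉ H) :
    W (Hit H z) = 4⁻¹ * ∑ d : Dir, W (Hit H (z + vec d)) := by
  rw [W_cons, if_neg, zero_add]
  · simp only [Hit_cons hz]
  · rintro ⟨h, -⟩
    exact hz (by simpa using h)

lemma exit_mass (l : ℤ) (z : Lat) : W (Hit {w | l ≤ linf w} z) = 1 := by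
  set H : Set Lat := {w | l ≤ linf w} with hH
  set b : Lat → ℝ := fun z => (W (Hit H z)).toReal with hb
  have hfin : ∀ z, W (Hit H z) ≠ ⊤ := fun z =>
    ne_top_of_le_ne_top (by simp) (W_Hit_le H z)
  have hout : ∀ z ∈ H, b z = 1 := by
    intro z hz
    simp [hb, Hit_of_mem hz, W_nil]
  have hle : ∀ z, b z ≤ 1 := by
    intro z
    have := ENNReal.toReal_mono (by simp) (W_Hit_le H z)
    simpa using this
  have hharm : ∀ z, z ∉ H → 4 * b z = b (z + (1, 0)) + b (z + (0, 1)) + b (z + (-1, 0))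
      + b (z + (0, -1)) := by
    intro z hz
    simp only [hb]
    rw [W_Hit_step hz, ENNReal.toReal_mul, ENNReal.toReal_sum (fun d _ => hfin _)]
    simp [Fin.sum_univ_four, vec]
  have hfinite : (Hᶜ).Finite := by
    refine Set.Finite.subset ((Set.finite_Icc (-l) l).prod (Set.finite_Icc (-l) l)) ?_
    intro w hw
    simp only [hH, Set.mem_compl_iff, Set.mem_ofPred_eq, linf, not_le, max_lt_iff] at hw
    have h1 := abs_lt.1 hw.1
    have h2 := abs_lt.1 hw.2
    simp only [Set.mem_prod, Set.mem_Icc]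
    omega
  have hmin : ∀ z, 1 ≤ b z := by
    rcases (Hᶜ).eq_empty_or_nonempty with he | hne
    · intro z
      have : z ∈ H := by
        by_contra h
        have : z ∈ Hᶜ := h
        simp [he] at this
      rw [hout z this]
    obtain ⟨z0, -, hz0⟩ := Set.exists_min_image _ b hfinite hne
    have hz0' : ∀ z, b z0 ≤ b z := by
      intro z
      by_cases h : z ∈ H
      · rw [hout z h]; exact hle _
      · exact hz0 z h
    have hrow : ∀ k : ℕ, b (z0 + ((k : ℤ), 0)) ≤ b z0 := by
      intro k
      induction k with
      | zero =>
        have e0 : z0 + (((0 : ℕ) : ℤ), (0 : ℤ)) = z0 := by ext <;> simp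
        rw [e0]
      | succ k ih =>
        by_cases h : z0 + ((k : ℤ), 0) ∈ H
        · rw [hout _ h] at ih
          exact (hle _).trans ih
        · have h1 := hharm _ h
          have e1 : z0 + (((k + 1 : ℕ) : ℤ), 0) = z0 + ((k : ℤ), 0) + (1, 0) := by
            ext <;> simp [add_assoc]
          rw [e1]
          have h2 := hz0' (z0 + ((k : ℤ), 0) + (0, 1))
          have h3 := hz0' (z0 + ((k : ℤ), 0) + (-1, 0))
          have h4 := hz0' (z0 + ((k : ℤ), 0) + (0, -1))
          linarith
    have hfar : z0 + (((l - z0.1).toNat : ℤ), 0) ∈ H := by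
      simp only [hH, Set.mem_ofPred_eq, linf]
      refine le_trans ?_ (le_max_left _ _)
      refine le_trans ?_ (le_abs_self _)
      simp only [Prod.fst_add]
      omega
    have := hrow (l - z0.1).toNat
    rw [hout _ hfar] at this
    exact fun z => this.trans (hz0' z)
  have := le_antisymm (hle z) (hmin z)
  rw [← ENNReal.toReal_eq_one_iff]
  exact this

lemma vec_cases (d : Dir) : vec d = (1, 0) ∨ vec d = (0, 1) ∨ vec d = (-1, 0) ∨
    vec d = (0, -1) := by
  fin_cases d <;> simp [vec]

/-- Exit through the upper half of the right side. -/
def HalfExit (l : ℤ) (m : List Dir) : Prop :=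
  Pth (fun w => -(l - 1) ≤ w.1 ∧ w.1 ≤ l ∧ -(l - 1) ≤ w.2 ∧ w.2 ≤ l - 1) m ∧
    (disp m).1 = l ∧ 0 ≤ (disp m).2

lemma hit_props {l : ℤ} (hl : 1 ≤ l) {m : List Dir} (hm : m ∈ Hit {w | l ≤ linf w} 0) :
    (∀ u, u <+: m → u ≠ m → linf (disp u) < l) ∧
      ∃ (u : List Dir) (d : Dir), m = u ++ [d] ∧ linf (disp u) < l ∧
        disp m = disp u + vec d ∧ l ≤ linf (disp m) := by
  have h1 : ∀ u, u <+: m → u ≠ m → linf (disp u) < l := by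
    intro u hu hne
    have := hm.2 u hu hne
    simpa using this
  refine ⟨h1, ?_⟩
  rcases List.eq_nil_or_concat m with rfl | ⟨u, d, rfl⟩
  · have := hm.1
    simp [linf] at this
    omega
  · refine ⟨u, d, by simp, h1 u ?_ ?_, by simp, by simpa using hm.1⟩
    · simp
    · simp

lemma reach_half {l : ℤ} (hl : 1 ≤ l) : Reach (HalfExit l) 8⁻¹ := by
  set E := Hit {w | l ≤ linf w} 0 with hE
  set M : Set (List Dir) := {m | m ∈ E ∧ (disp m).1 = l ∧ 0 ≤ (disp m).2} with hM
  have hmapR : ∀ k m, m ∈ E → m.map (rotE k) ∈ E := by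
    intro k m hm
    refine ⟨?_, ?_⟩
    · simpa [disp_map_rot, linf_rotL] using hm.1
    · intro u hu hne
      obtain ⟨v, hv, rfl⟩ := prefix_map_exists hu
      have := hm.2 v hv (fun h => hne (by rw [h]))
      simpa [disp_map_rot, linf_rotL] using this
  have hmapC : ∀ m, m ∈ E → m.map conjE ∈ E := by
    intro m hm
    refine ⟨?_, ?_⟩
    · simpa [disp_map_conj, linf_conjL] using hm.1
    · intro u hu hne
      obtain ⟨v, hv, rfl⟩ := prefix_map_exists hu
      have := hm.2 v hv (fun h => hne (by rw [h]))
      simpa [disp_map_conj, linf_conjL] using this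
  refine ⟨M, fun a ha b hb => PF_Hit _ _ a ha.1 b hb.1, ?_, ?_⟩
  · set T : Dir × Bool → Set (List Dir) := fun kj =>
      {m | m.map (rotE kj.1) ∈ (if kj.2 then {m | m.map conjE ∈ M} else M)} with hT
    have hcov : E ⊆ ⋃ kj, T kj := by
      intro m hm
      obtain ⟨-, u, d, rfl, hu, hd, hl'⟩ := hit_props hl hm
      have hu' := abs_lt.1 (max_lt_iff.1 hu).1
      have hu2 := abs_lt.1 (max_lt_iff.1 hu).2
      set w := disp (u ++ [d]) with hw
      have hcase : w.1 = l ∨ w.1 = -l ∨ w.2 = l ∨ w.2 = -l := by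
        have h1 : w.1 = (disp u).1 + (vec d).1 := by rw [hd]; rfl
        have h2 : w.2 = (disp u).2 + (vec d).2 := by rw [hd]; rfl
        rw [linf, le_max_iff, le_abs, le_abs] at hl'
        rcases vec_cases d with h | h | h | h <;> rw [h] at h1 h2 <;> simp at h1 h2 <;> omega
      have key : ∃ k, (rotL k w).1 = l := by
        rcases hcase with h | h | h | h
        · exact ⟨0, by simp [rotL, h]⟩
        · exact ⟨2, by simp [rotL, h]⟩
        · exact ⟨3, by simp [rotL, h]⟩
        · exact ⟨1, by simp [rotL, h]⟩
      obtain ⟨k, hk⟩ := key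
      rw [Set.mem_iUnion]
      by_cases hs : 0 ≤ (rotL k w).2
      · refine ⟨(k, false), ?_⟩
        simp only [hT, Set.mem_ofPred_eq, Bool.false_eq_true, if_false]
        exact ⟨hmapR k _ hm, by rw [disp_map_rot]; exact hk, by rw [disp_map_rot]; exact hs⟩
      · refine ⟨(k, true), ?_⟩
        simp only [hT, Set.mem_ofPred_eq, if_true]
        refine ⟨hmapC _ (hmapR k _ hm), ?_, ?_⟩
        · rw [disp_map_conj, disp_map_rot]; exact hk
        · rw [disp_map_conj, disp_map_rot]
          simp only [conjL]
          rw [← hw]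
          omega
    have hTW : ∀ kj, W (T kj) = W M := by
      rintro ⟨k, j⟩
      simp only [hT]
      rw [W_map]
      cases j
      · simp
      · simp [W_map]
    have h1 : (1 : ℝ≥0∞) ≤ 8 * W M := by
      calc (1 : ℝ≥0∞) = W E := (exit_mass l 0).symm
        _ ≤ W (⋃ kj, T kj) := W_mono hcov
        _ ≤ ∑' kj, W (T kj) := W_iUnion_le _
        _ = 8 * W M := by
          simp only [hTW]
          rw [tsum_fintype]
          simp
    rw [ENNReal.inv_le_iff_le_mul (by simp) (by simp)]
    exact h1
  · rintro m ⟨hm, h1, h2⟩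
    obtain ⟨hp, u, d, rfl, hu, hd, hl'⟩ := hit_props hl hm
    have hu' := abs_lt.1 (max_lt_iff.1 hu).1
    have hu2 := abs_lt.1 (max_lt_iff.1 hu).2
    refine ⟨?_, h1, h2⟩
    intro v hv
    by_cases hvm : v = u ++ [d]
    · rw [hvm]
      set w := disp (u ++ [d]) with hw
      have h1' : w.1 = (disp u).1 + (vec d).1 := by rw [hd]; rfl
      have h2' : w.2 = (disp u).2 + (vec d).2 := by rw [hd]; rfl
      rcases vec_cases d with h | h | h | h <;> rw [h] at h1' h2' <;> simp at h1' h2' <;> omega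
    · have := hp v hv hvm
      have hu' := abs_lt.1 (max_lt_iff.1 this).1
      have hu2 := abs_lt.1 (max_lt_iff.1 this).2
      omega

/-- A run to the right in a band: `k` steps, initial offset `b`. -/
def RunR (l : ℤ) (k : ℕ) (b : ℤ) (m : List Dir) : Prop :=
  Pth (fun w => -(l - 1) ≤ w.1 ∧ w.1 ≤ k * l ∧ -(2 * (l - 1)) ≤ b + w.2 ∧
    b + w.2 ≤ 2 * (l - 1)) m ∧
    (disp m).1 = k * l ∧ -(l - 1) ≤ b + (disp m).2 ∧ b + (disp m).2 ≤ l - 1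

lemma reach_run {l : ℤ} (hl : 1 ≤ l) (k : ℕ) {b : ℤ} (hb : -(l - 1) ≤ b) (hb' : b ≤ l - 1) :
    Reach (RunR l k b) (8⁻¹ ^ k) := by
  induction k with
  | zero =>
    rw [pow_zero]
    refine Reach.nil ⟨?_, by simp, by simpa using hb, by simpa using hb'⟩
    intro u hu
    rw [List.prefix_nil.1 hu]
    simp
    omega
  | succ k ih =>
    rw [pow_succ]
    refine ih.comp ?_
    rintro a ⟨ha1, ha2, ha3, ha4⟩
    by_cases hs : b + (disp a).2 ≤ 0
    · refine (reach_half hl).mono le_rfl ?_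
      rintro m ⟨hm1, hm2, hm3⟩
      have hm4 := hm1 m List.prefix_rfl
      refine ⟨Pth.append (ha1.mono ?_) (hm1.mono ?_), ?_, ?_, ?_⟩
      · rintro z hz
        push_cast
        refine ⟨hz.1, ?_, hz.2.2.1, hz.2.2.2⟩
        nlinarith [hz.2.1]
      · rintro z hz
        simp only [Prod.fst_add, Prod.snd_add, ha2]
        push_cast
        refine ⟨by nlinarith [mul_nonneg (Int.natCast_nonneg k) (by omega : (0:ℤ) ≤ l)],
          by nlinarith, by omega, by omega⟩
      · simp [ha2, hm2]; ring
      · simp only [disp_append, Prod.snd_add]; omega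
      · simp only [disp_append, Prod.snd_add]; omega
    · refine ((reach_half hl).map conjE).mono le_rfl ?_
      rintro m ⟨hm1, hm2, hm3⟩
      have hm4 := hm1 _ List.prefix_rfl
      have hm1 := hm1.of_map_conj
      rw [disp_map_conj] at hm2 hm3 hm4
      simp only [conjL] at hm1 hm2 hm3 hm4
      refine ⟨Pth.append (ha1.mono ?_) (hm1.mono ?_), ?_, ?_, ?_⟩
      · rintro z hz
        push_cast
        refine ⟨hz.1, ?_, hz.2.2.1, hz.2.2.2⟩
        nlinarith [hz.2.1]
      · rintro z hz
        simp only [Prod.fst_add, Prod.snd_add, ha2]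
        push_cast
        refine ⟨by nlinarith [mul_nonneg (Int.natCast_nonneg k) (by omega : (0:ℤ) ≤ l)],
          by nlinarith, by omega, by omega⟩
      · simp [ha2, hm2]; ring
      · simp only [disp_append, Prod.snd_add]; omega
      · simp only [disp_append, Prod.snd_add]; omega

/-! ### Making a circuit with positive probability -/

lemma lt_linf {r : ℤ} {z : Lat} :
    r < linf z ↔ r < z.1 ∨ r < -z.1 ∨ r < z.2 ∨ r < -z.2 := by
  rw [linf, lt_max_iff, lt_abs, lt_abs]; tauto

lemma linf_le {r : ℤ} {z : Lat} :
    linf z ≤ r ↔ z.1 ≤ r ∧ -z.1 ≤ r ∧ z.2 ≤ r ∧ -z.2 ≤ r := by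
  rw [linf, max_le_iff, abs_le', abs_le']; tauto

lemma le_linf {r : ℤ} {z : Lat} :
    r ≤ linf z ↔ r ≤ z.1 ∨ r ≤ -z.1 ∨ r ≤ z.2 ∨ r ≤ -z.2 := by
  rw [linf, le_max_iff, le_abs, le_abs]; tauto

/-- Travel from `z` to `T` outside the box of radius `r`, with mass at least `p`. -/
def Go (r : ℤ) (z : Lat) (T : Lat → Prop) (p : ℝ≥0∞) : Prop :=
  Reach (fun m => Pth (fun w => r < linf (z + w)) m ∧ T (z + disp m)) p

lemma Go.comp {r : ℤ} {z : Lat} {T T' : Lat → Prop} {p p' : ℝ≥0∞} (h : Go r z T p)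
    (h' : ∀ z', T z' → Go r z' T' p') : Go r z T' (p * p') := by
  refine Reach.comp h ?_
  rintro a ⟨ha, ha'⟩
  refine (h' _ ha').mono le_rfl ?_
  rintro b ⟨hb, hb'⟩
  refine ⟨ha.append (hb.mono fun w hw => ?_), ?_⟩
  · simpa [add_assoc] using hw
  · simpa [add_assoc] using hb'

lemma Go.refl {r : ℤ} {z : Lat} {T : Lat → Prop} (hz : r < linf z) (hT : T z) : Go r z T 1 := by
  refine Reach.nil ⟨fun u hu => ?_, by simpa using hT⟩
  rw [List.prefix_nil.1 hu]
  simpa using hz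

lemma Go.mono {r : ℤ} {z : Lat} {T T' : Lat → Prop} {p p' : ℝ≥0∞} (h : Go r z T p)
    (hp : p' ≤ p) (hT : ∀ z, T z → T' z) : Go r z T' p' :=
  Reach.mono h hp fun _ hm => ⟨hm.1, hT _ hm.2⟩

lemma go_up {r l : ℤ} (hl : 1 ≤ l) (k : ℕ) (z : Lat)
    (h : ∀ w : Lat, -(2 * (l - 1)) ≤ w.1 - z.1 → w.1 - z.1 ≤ 2 * (l - 1) →
      z.2 - (l - 1) ≤ w.2 → r < linf w) :
    Go r z (fun w => -(l - 1) ≤ w.1 - z.1 ∧ w.1 - z.1 ≤ l - 1 ∧ w.2 = z.2 + k * l)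
      (8⁻¹ ^ k) := by
  refine ((reach_run hl k (b := 0) (by omega) (by omega)).map (rotE 3)).mono le_rfl ?_
  rintro m ⟨h1, h2, h3, h4⟩
  rw [disp_map_rot] at h2 h3 h4
  refine ⟨h1.of_map_rot.mono fun w hw => h _ ?_ ?_ ?_, ?_, ?_, ?_⟩ <;>
    simp only [rotL] at * <;> simp at * <;> omega

lemma go_down {r l : ℤ} (hl : 1 ≤ l) (k : ℕ) (z : Lat)
    (h : ∀ w : Lat, -(2 * (l - 1)) ≤ w.1 - z.1 → w.1 - z.1 ≤ 2 * (l - 1) →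
      w.2 ≤ z.2 + (l - 1) → r < linf w) :
    Go r z (fun w => -(l - 1) ≤ w.1 - z.1 ∧ w.1 - z.1 ≤ l - 1 ∧ w.2 = z.2 - k * l)
      (8⁻¹ ^ k) := by
  refine ((reach_run hl k (b := 0) (by omega) (by omega)).map (rotE 1)).mono le_rfl ?_
  rintro m ⟨h1, h2, h3, h4⟩
  rw [disp_map_rot] at h2 h3 h4
  refine ⟨h1.of_map_rot.mono fun w hw => h _ ?_ ?_ ?_, ?_, ?_, ?_⟩ <;>
    simp only [rotL] at * <;> simp at * <;> omega

lemma go_left {r l : ℤ} (hl : 1 ≤ l) (k : ℕ) (z : Lat)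
    (h : ∀ w : Lat, -(2 * (l - 1)) ≤ w.2 - z.2 → w.2 - z.2 ≤ 2 * (l - 1) →
      w.1 ≤ z.1 + (l - 1) → r < linf w) :
    Go r z (fun w => -(l - 1) ≤ w.2 - z.2 ∧ w.2 - z.2 ≤ l - 1 ∧ w.1 = z.1 - k * l)
      (8⁻¹ ^ k) := by
  refine ((reach_run hl k (b := 0) (by omega) (by omega)).map (rotE 2)).mono le_rfl ?_
  rintro m ⟨h1, h2, h3, h4⟩
  rw [disp_map_rot] at h2 h3 h4
  refine ⟨h1.of_map_rot.mono fun w hw => h _ ?_ ?_ ?_, ?_, ?_, ?_⟩ <;>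
    simp only [rotL] at * <;> simp at * <;> omega

/-- A crossing of the rectangle `[-s,s] × [r+1,s]` from left to right. -/
def Cross (r s : ℤ) (z : Lat) (v : List Dir) : Prop :=
  Pth (fun w => r + 1 ≤ (z + w).2 ∧ (z + w).2 ≤ s) v ∧ z.1 ≤ -s ∧ s ≤ (z + disp v).1

/-- The path `m` from `x` contains a crossing in each of the four directions. -/
def CrossIn (r s : ℤ) (k : Dir) (x : Lat) (m : List Dir) : Prop :=
  ∃ u v w, m = u ++ v ++ w ∧ Cross r s (rotL k (x + disp u)) (v.map (rotE k))

/-- The path `m` from `x` contains a circuit. -/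
def Good (r s : ℤ) (x : Lat) (m : List Dir) : Prop := ∀ k, CrossIn r s k x m

lemma CrossIn.append_right {r s : ℤ} {k : Dir} {x : Lat} {m : List Dir}
    (h : CrossIn r s k x m) (b : List Dir) : CrossIn r s k x (m ++ b) := by
  obtain ⟨u, v, w, rfl, h⟩ := h
  exact ⟨u, v, w ++ b, by simp, h⟩

lemma CrossIn.append_left {r s : ℤ} {k : Dir} {x : Lat} {a m : List Dir}
    (h : CrossIn r s k (x + disp a) m) : CrossIn r s k x (a ++ m) := by
  obtain ⟨u, v, w, rfl, h⟩ := h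
  exact ⟨a ++ u, v, w, by simp, by simpa [add_assoc] using h⟩

lemma exists_steps {l D : ℤ} (hl : 1 ≤ l) (hD : 0 ≤ D) {K : ℕ} (hK : D ≤ K * l) :
    ∃ k : ℕ, k ≤ K ∧ D ≤ k * l ∧ (k * l : ℤ) ≤ D + l - 1 := by
  have h1 := Int.mul_ediv_add_emod (D + l - 1) l
  have h2 := Int.emod_nonneg (D + l - 1) (by omega : l ≠ 0)
  have h3 := Int.emod_lt_of_pos (D + l - 1) (by omega : 0 < l)
  have h4 : 0 ≤ (D + l - 1) / l := Int.ediv_nonneg (by omega) (by omega)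
  refine ⟨((D + l - 1) / l).toNat, ?_, ?_, ?_⟩
  · have : (D + l - 1) / l ≤ K := by
      have : (D + l - 1) / l < K + 1 := by
        apply Int.ediv_lt_of_lt_mul (by omega)
        nlinarith
      omega
    omega
  · rw [Int.toNat_of_nonneg h4]
    nlinarith
  · rw [Int.toNat_of_nonneg h4]
    nlinarith

lemma eighth_pow_le {k K : ℕ} (h : k ≤ K) : (8⁻¹ : ℝ≥0∞) ^ K ≤ 8⁻¹ ^ k :=
  pow_le_pow_of_le_one (by simp) (by simp) h

section
variable {r s l : ℤ} {N : ℕ}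

lemma phaseA (hr : 1 ≤ r) (hl : 1 ≤ l) (hls : 4 * (l - 1) ≤ s - r - 1) (hN : s ≤ N * l)
    {z : Lat} (hz : s ≤ linf z) (hz2 : linf z ≤ 2 * s) :
    Go r z (fun w => (s ≤ w.2 ∨ s ≤ -w.2 ∨ w.1 ≤ -s) ∧ -(2 * s) ≤ w.1 ∧ w.1 ≤ 3 * s ∧
      w.2 ≤ 2 * s ∧ -(2 * s) ≤ w.2) (8⁻¹ ^ (5 * N)) := by
  rw [le_linf] at hz
  rw [linf_le] at hz2
  by_cases hc : s ≤ z.2 ∨ s ≤ -z.2 ∨ z.1 ≤ -s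
  · refine (Go.refl (lt_linf.2 (by omega)) ?_).mono ?_ fun _ h => h
    · omega
    · simpa using eighth_pow_le (Nat.zero_le (5 * N))
  · obtain ⟨k, hk1, hk2, hk3⟩ := exists_steps (K := 5 * N) hl (by omega : 0 ≤ s - z.2)
      (by push_cast; nlinarith)
    refine (go_up hl k z ?_).mono (eighth_pow_le hk1) ?_
    · intro w h1 h2 h3
      rw [lt_linf]; omega
    · intro w hw
      omega

lemma phaseB (hr : 1 ≤ r) (hl : 1 ≤ l) (hls : 4 * (l - 1) ≤ s - r - 1) (hN : s ≤ N * l)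
    {z : Lat} (hz : (s ≤ z.2 ∨ s ≤ -z.2 ∨ z.1 ≤ -s) ∧ -(2 * s) ≤ z.1 ∧ z.1 ≤ 3 * s ∧
      z.2 ≤ 2 * s ∧ -(2 * s) ≤ z.2) :
    Go r z (fun w => w.1 ≤ -(2 * s) ∧ -(3 * s) ≤ w.1 ∧
      w.2 ≤ 3 * s ∧ -(3 * s) ≤ w.2) (8⁻¹ ^ (5 * N)) := by
  obtain ⟨k, hk1, hk2, hk3⟩ := exists_steps (K := 5 * N) hl (by omega : 0 ≤ 2 * s + z.1)
      (by push_cast; nlinarith)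
  refine (go_left hl k z ?_).mono (eighth_pow_le hk1) ?_
  · intro w h1 h2 h3
    rw [lt_linf]; omega
  · intro w hw
    omega

lemma phaseC (hr : 1 ≤ r) (hl : 1 ≤ l) (hls : 4 * (l - 1) ≤ s - r - 1) (hN : s ≤ N * l)
    {z : Lat} (hz : z.1 ≤ -(2 * s) ∧ -(3 * s) ≤ z.1 ∧ z.2 ≤ 3 * s ∧ -(3 * s) ≤ z.2) :
    Go r z (fun w => w.1 ≤ -s ∧ -(4 * s) ≤ w.1 ∧
      w.2 - (s - 2 * (l - 1)) ≤ l - 1 ∧ -(l - 1) ≤ w.2 - (s - 2 * (l - 1)))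
      (8⁻¹ ^ (5 * N)) := by
  rcases lt_or_ge z.2 (s - 2 * (l - 1) - (l - 1)) with h | h
  · obtain ⟨k, hk1, hk2, hk3⟩ := exists_steps (K := 5 * N) hl
      (by omega : 0 ≤ s - 2 * (l - 1) - (l - 1) - z.2) (by push_cast; nlinarith)
    refine (go_up hl k z ?_).mono (eighth_pow_le hk1) ?_
    · intro w h1 h2 h3
      rw [lt_linf]; omega
    · intro w hw
      omega
  rcases lt_or_ge (s - 2 * (l - 1) + (l - 1)) z.2 with h' | h'
  · obtain ⟨k, hk1, hk2, hk3⟩ := exists_steps (K := 5 * N) hl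
      (by omega : 0 ≤ z.2 - (s - 2 * (l - 1) + (l - 1))) (by push_cast; nlinarith)
    refine (go_down hl k z ?_).mono (eighth_pow_le hk1) ?_
    · intro w h1 h2 h3
      rw [lt_linf]; omega
    · intro w hw
      omega
  refine (Go.refl (lt_linf.2 (by omega)) ?_).mono ?_ fun _ h => h
  · omega
  · simpa using eighth_pow_le (Nat.zero_le (5 * N))

lemma phaseD (hr : 1 ≤ r) (hl : 1 ≤ l) (hls : 4 * (l - 1) ≤ s - r - 1) (hN : s ≤ N * l)
    {z : Lat} (hz : z.1 ≤ -s ∧ -(4 * s) ≤ z.1 ∧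
      z.2 - (s - 2 * (l - 1)) ≤ l - 1 ∧ -(l - 1) ≤ z.2 - (s - 2 * (l - 1))) :
    Reach (fun m => Cross r s z m ∧ s ≤ linf (z + disp m) ∧ linf (z + disp m) ≤ 2 * s)
      (8⁻¹ ^ (5 * N)) := by
  obtain ⟨k, hk1, hk2, hk3⟩ := exists_steps (K := 5 * N) hl
      (by omega : 0 ≤ s - z.1) (by push_cast; nlinarith)
  refine (reach_run hl k (b := z.2 - (s - 2 * (l - 1))) (by omega) (by omega)).mono
    (eighth_pow_le hk1) ?_
  rintro m ⟨h1, h2, h3, h4⟩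
  refine ⟨⟨h1.mono fun w hw => ?_, hz.1, ?_⟩, ?_, ?_⟩
  · simp only [Prod.snd_add]; omega
  · simp only [Prod.fst_add]; omega
  · rw [le_linf]; simp only [Prod.fst_add, Prod.snd_add]; omega
  · rw [linf_le]; simp only [Prod.fst_add, Prod.snd_add]; omega

lemma topCross (hr : 1 ≤ r) (hl : 1 ≤ l) (hls : 4 * (l - 1) ≤ s - r - 1) (hN : s ≤ N * l)
    {z : Lat} (hz : s ≤ linf z) (hz2 : linf z ≤ 2 * s) :
    Reach (fun m => Pth (fun w => r < linf (z + w)) m ∧ s ≤ linf (z + disp m) ∧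
      linf (z + disp m) ≤ 2 * s ∧ ∃ u v, m = u ++ v ∧ Cross r s (z + disp u) v)
      (8⁻¹ ^ (20 * N)) := by
  have h := ((phaseA hr hl hls hN hz hz2).comp (fun z' hz' => phaseB hr hl hls hN hz')).comp
    (fun z' hz' => phaseC hr hl hls hN hz')
  refine (Reach.comp h (p' := 8⁻¹ ^ (5 * N)) ?_).mono ?_ fun m hm => hm
  · rintro a ⟨ha1, ha2⟩
    refine (phaseD hr hl hls hN ha2).mono le_rfl ?_
    rintro m ⟨hm1, hm2, hm3⟩
    refine ⟨ha1.append (hm1.1.mono fun w hw => ?_), ?_, ?_, a, m, rfl, hm1⟩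
    · rw [lt_linf]
      simp only [Prod.snd_add, Prod.fst_add] at *
      omega
    · simpa [add_assoc] using hm2
    · simpa [add_assoc] using hm3
  · rw [← pow_add, ← pow_add, ← pow_add]
    exact eighth_pow_le (by omega)

lemma rotCross (hr : 1 ≤ r) (hl : 1 ≤ l) (hls : 4 * (l - 1) ≤ s - r - 1) (hN : s ≤ N * l)
    (k : Dir) {z : Lat} (hz : s ≤ linf z) (hz2 : linf z ≤ 2 * s) :
    Reach (fun m => Pth (fun w => r < linf (z + w)) m ∧ s ≤ linf (z + disp m) ∧
      linf (z + disp m) ≤ 2 * s ∧ CrossIn r s k z m) (8⁻¹ ^ (20 * N)) := by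
  have h := (topCross hr hl hls hN (z := rotL k z) (by rwa [linf_rotL])
    (by rwa [linf_rotL])).map (rotE k)
  refine h.mono le_rfl ?_
  rintro m ⟨h1, h2, h3, u, v, huv, h4⟩
  rw [disp_map_rot, ← rotL_add, linf_rotL] at h2 h3
  refine ⟨h1.of_map_rot.mono fun w hw => ?_, h2, h3, ?_⟩
  · rwa [← rotL_add, linf_rotL] at hw
  · rw [List.map_eq_append_iff] at huv
    obtain ⟨u', v', rfl, rfl, rfl⟩ := huv
    refine ⟨u', v', [], by simp, ?_⟩
    rwa [rotL_add, ← disp_map_rot]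

lemma reach_good (hr : 1 ≤ r) (hl : 1 ≤ l) (hls : 4 * (l - 1) ≤ s - r - 1) (hN : s ≤ N * l)
    {z : Lat} (hz : linf z = s) :
    Reach (fun m => Pth (fun w => r < linf (z + w)) m ∧ Good r s z m) (8⁻¹ ^ (80 * N)) := by
  have step : ∀ (n : ℕ), n ≤ 4 →
      Reach (fun m => Pth (fun w => r < linf (z + w)) m ∧ s ≤ linf (z + disp m) ∧
      linf (z + disp m) ≤ 2 * s ∧ ∀ k : Dir, k.1 < n → CrossIn r s k z m)
      ((8⁻¹ ^ (20 * N)) ^ n) := by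
    intro n
    induction n with
    | zero =>
      intro _
      rw [pow_zero]
      refine Reach.nil ⟨fun u hu => ?_, ?_, ?_, ?_⟩
      · rw [List.prefix_nil.1 hu]; simp; omega
      · simp; omega
      · simp; omega
      · simp
    | succ n ih =>
      intro hn
      rw [pow_succ]
      refine (ih (by omega)).comp ?_
      rintro a ⟨ha1, ha2, ha3, ha4⟩
      refine (rotCross hr hl hls hN ⟨n, by omega⟩ ha2 ha3).mono le_rfl ?_
      rintro m ⟨hm1, hm2, hm3, hm4⟩
      refine ⟨ha1.append (hm1.mono fun w hw => ?_), ?_, ?_, ?_⟩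
      · simpa [add_assoc] using hw
      · simpa [add_assoc] using hm2
      · simpa [add_assoc] using hm3
      · intro k hk
        rcases Nat.lt_succ_iff_lt_or_eq.1 hk with h | h
        · exact (ha4 k h).append_right _
        · have : k = ⟨n, by omega⟩ := Fin.ext h
          rw [this]
          exact hm4.append_left
  refine (step 4 le_rfl).mono ?_ ?_
  · rw [← pow_mul]
    exact eighth_pow_le (by omega)
  · rintro m ⟨h1, -, -, h2⟩
    exact ⟨h1, fun k => h2 k k.2⟩

end

/-! ### The half-plane Poisson kernel -/

/-- Fourier coefficients of the truncated Poisson kernel. -/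
def Cf (θ : ℝ) : ℕ → ℕ → ℝ
  | _, 0 => 1
  | 0, _ + 1 => 0
  | n + 1, j + 1 => Real.cos θ / 2 * Cf θ n (j + 1) + (Cf θ n j + Cf θ n (j + 2)) / 4

lemma Cf_zero_right (θ : ℝ) (n : ℕ) : Cf θ n 0 = 1 := by cases n <;> simp [Cf]

lemma Cf_cont (n : ℕ) : ∀ j, Continuous fun θ => Cf θ n j := by
  induction n with
  | zero =>
    intro j
    cases j with
    | zero => simp only [Cf]; fun_prop
    | succ j => simp only [Cf]; fun_prop
  | succ n ih =>
    intro j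
    cases j with
    | zero => simp only [Cf]; fun_prop
    | succ j =>
      simp only [Cf]
      have h1 := ih j
      have h2 := ih (j + 1)
      have h3 := ih (j + 2)
      fun_prop

lemma cosh_aux (S : ℝ) (hS : 0 ≤ S) (hS1 : S ≤ 1) :
    Real.exp (-(S / 2)) + Real.exp (S / 2) ≤ 2 + S ^ 2 / 2 := by
  have h1 : Real.cosh (S / 2) ≤ Real.exp ((S / 2) ^ 2 / 2) := Real.cosh_le_exp_half_sq _
  have h2 : Real.exp ((S / 2) ^ 2 / 2) ≤ 1 + S ^ 2 / 4 := by
    have h0 : (S / 2) ^ 2 / 2 ≤ 1 / 8 := by nlinarith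
    have h00 : 0 ≤ (S / 2) ^ 2 / 2 := by positivity
    have := Real.exp_bound_div_one_sub_of_interval h00 (by linarith)
    refine this.trans ?_
    rw [div_le_iff₀ (by linarith)]
    nlinarith
  rw [Real.cosh_eq] at h1
  linarith

lemma Cf_bound (θ : ℝ) (hθ : 0 ≤ Real.sin θ) (n : ℕ) :
    ∀ j : ℕ, |Cf θ n j| ≤ Real.exp (-(Real.sin θ / 2)) ^ j := by
  set q := Real.exp (-(Real.sin θ / 2)) with hq
  have hq0 : 0 < q := Real.exp_pos _
  have hkey : |Real.cos θ| / 2 * q + (1 + q ^ 2) / 4 ≤ q := by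
    have hc : |Real.cos θ| ≤ 1 - Real.sin θ ^ 2 / 2 := by
      have h1 := Real.sin_sq_add_cos_sq θ
      apply abs_le_of_sq_le_sq
      · nlinarith [sq_nonneg (Real.sin θ ^ 2)]
      · nlinarith [sq_nonneg (Real.cos θ)]
    have h2 := cosh_aux _ hθ (Real.sin_le_one θ)
    have h3 : q * Real.exp (Real.sin θ / 2) = 1 := by
      rw [hq, ← Real.exp_add]; simp
    have h4 : q * (q + Real.exp (Real.sin θ / 2)) ≤ q * (2 + Real.sin θ ^ 2 / 2) := by
      gcongr
    nlinarith [mul_le_mul_of_nonneg_left hc hq0.le]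
  induction n with
  | zero =>
    intro j
    cases j with
    | zero => simp [Cf]
    | succ j => simp only [Cf]; simp; positivity
  | succ n ih =>
    intro j
    cases j with
    | zero => simp [Cf]
    | succ j =>
      simp only [Cf]
      have h1 := ih j
      have h2 := ih (j + 1)
      have h3 := ih (j + 2)
      have hp : 0 < q ^ j := by positivity
      calc |Real.cos θ / 2 * Cf θ n (j + 1) + (Cf θ n j + Cf θ n (j + 2)) / 4|
          ≤ |Real.cos θ| / 2 * |Cf θ n (j + 1)| + (|Cf θ n j| + |Cf θ n (j + 2)|) / 4 := by
            refine (abs_add_le _ _).trans ?_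
            rw [abs_mul, abs_div, abs_div, abs_of_pos (by norm_num : (0:ℝ) < 2),
              abs_of_pos (by norm_num : (0:ℝ) < 4)]
            gcongr
            exact abs_add_le _ _
        _ ≤ |Real.cos θ| / 2 * q ^ (j + 1) + (q ^ j + q ^ (j + 2)) / 4 := by gcongr
        _ = q ^ j * (|Real.cos θ| / 2 * q + (1 + q ^ 2) / 4) := by ring
        _ ≤ q ^ j * q := by gcongr
        _ = q ^ (j + 1) := by ring

/-- The truncated Poisson kernel as a Fourier integral. -/
def Fk (n : ℕ) (k : ℤ) (j : ℕ) : ℝ :=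
  (1 / Real.pi) * ∫ θ in (0 : ℝ)..Real.pi, Cf θ n j * Real.cos (k * θ)

lemma Fk_ii (n : ℕ) (k : ℤ) (j : ℕ) :
    IntervalIntegrable (fun θ => Cf θ n j * Real.cos (k * θ)) volume 0 Real.pi := by
  apply Continuous.intervalIntegrable
  have := Cf_cont n j
  fun_prop

lemma int_cos (k : ℤ) : ∫ θ in (0 : ℝ)..Real.pi, Real.cos (k * θ) =
    if k = 0 then Real.pi else 0 := by
  split_ifs with h
  · simp [h]
  · have hk : (k : ℝ) ≠ 0 := by exact_mod_cast h
    rw [intervalIntegral.integral_comp_mul_left (fun x => Real.cos x) hk]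
    simp [Real.sin_int_mul_pi]

lemma Fk_zero_right (n : ℕ) (k : ℤ) : Fk n k 0 = if k = 0 then 1 else 0 := by
  simp only [Fk, Cf_zero_right, one_mul, int_cos]
  split_ifs
  · field_simp
  · simp

lemma Fk_zero_left (k : ℤ) (j : ℕ) : Fk 0 k (j + 1) = 0 := by
  simp [Fk, Cf]

lemma Fk_succ (n : ℕ) (k : ℤ) (j : ℕ) : 4 * Fk (n + 1) k (j + 1) =
    Fk n (k + 1) (j + 1) + Fk n (k - 1) (j + 1) + Fk n k j + Fk n k (j + 2) := by
  simp only [Fk]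
  rw [← mul_add, ← mul_add, ← mul_add, ← mul_left_comm]
  congr 1
  rw [← intervalIntegral.integral_add (Fk_ii _ _ _) (Fk_ii _ _ _),
    ← intervalIntegral.integral_add ((Fk_ii _ _ _).add (Fk_ii _ _ _)) (Fk_ii _ _ _),
    ← intervalIntegral.integral_add (((Fk_ii _ _ _).add (Fk_ii _ _ _)).add (Fk_ii _ _ _))
      (Fk_ii _ _ _), ← intervalIntegral.integral_const_mul]
  congr 1
  ext θ
  simp only [Cf]
  have h1 : Real.cos (((k + 1 : ℤ) : ℝ) * θ) = Real.cos (k * θ) * Real.cos θ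
      - Real.sin (k * θ) * Real.sin θ := by
    rw [← Real.cos_add]; push_cast; ring_nf
  have h2 : Real.cos (((k - 1 : ℤ) : ℝ) * θ) = Real.cos (k * θ) * Real.cos θ
      + Real.sin (k * θ) * Real.sin θ := by
    rw [← Real.cos_sub]; push_cast; ring_nf
  rw [h1, h2]
  ring

lemma int_exp_le {a : ℝ} (ha : 0 < a) :
    ∫ θ in (0 : ℝ)..Real.pi, Real.exp (-a * θ) ≤ 1 / a := by
  rw [intervalIntegral.integral_comp_mul_left (fun x => Real.exp x) (by linarith : -a ≠ 0),
    integral_exp]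
  simp only [mul_zero, Real.exp_zero, smul_eq_mul]
  have := Real.exp_pos (-a * Real.pi)
  rw [inv_neg, neg_mul, ← mul_neg, neg_sub, inv_mul_eq_div]
  gcongr
  linarith

lemma Fk_le (n : ℕ) (k : ℤ) (j : ℕ) (hj : 0 < j) : Fk n k j ≤ 2 / j := by
  have hpi := Real.pi_pos
  have hj' : (0 : ℝ) < j := by exact_mod_cast hj
  set a : ℝ := j / Real.pi with ha
  have ha0 : 0 < a := by positivity
  have hb : ∀ θ ∈ Icc 0 Real.pi, Cf θ n j * Real.cos (k * θ) ≤
      Real.exp (-a * θ) + Real.exp (-a * (Real.pi - θ)) := by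
    intro θ hθ
    have hs : 0 ≤ Real.sin θ := Real.sin_nonneg_of_nonneg_of_le_pi hθ.1 hθ.2
    have h1 : Cf θ n j * Real.cos (k * θ) ≤ Real.exp (-(Real.sin θ / 2)) ^ j := by
      refine (le_abs_self _).trans ?_
      rw [abs_mul]
      calc |Cf θ n j| * |Real.cos (k * θ)| ≤ |Cf θ n j| * 1 := by
            gcongr; exact Real.abs_cos_le_one _
        _ ≤ _ := by rw [mul_one]; exact Cf_bound θ hs n j
    refine h1.trans ?_
    rw [← Real.exp_nat_mul]
    rcases le_total θ (Real.pi / 2) with h | h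
    · have h2 := Real.mul_le_sin hθ.1 h
      refine le_trans ?_ (le_add_of_nonneg_right (Real.exp_pos _).le)
      apply Real.exp_le_exp.2
      have : a * θ = j * (2 / Real.pi * θ / 2) := by rw [ha]; ring
      rw [neg_mul, this, mul_neg]
      gcongr
    · have h2 := Real.mul_le_sin (x := Real.pi - θ) (by linarith [hθ.2]) (by linarith)
      rw [Real.sin_pi_sub] at h2
      refine le_trans ?_ (le_add_of_nonneg_left (Real.exp_pos _).le)
      apply Real.exp_le_exp.2
      have : a * (Real.pi - θ) = j * (2 / Real.pi * (Real.pi - θ) / 2) := by rw [ha]; ring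
      rw [neg_mul, this, mul_neg]
      gcongr
  have hi1 : IntervalIntegrable (fun θ => Real.exp (-a * θ)) volume 0 Real.pi :=
    Continuous.intervalIntegrable (by fun_prop) _ _
  have hi2 : IntervalIntegrable (fun θ => Real.exp (-a * (Real.pi - θ))) volume 0 Real.pi :=
    Continuous.intervalIntegrable (by fun_prop) _ _
  have h3 := intervalIntegral.integral_mono_on hpi.le (Fk_ii n k j) (hi1.add hi2) hb
  have h4 : ∫ θ in (0 : ℝ)..Real.pi, Real.exp (-a * (Real.pi - θ)) =
      ∫ θ in (0 : ℝ)..Real.pi, Real.exp (-a * θ) := by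
    rw [intervalIntegral.integral_comp_sub_left (fun x => Real.exp (-a * x))]
    simp
  rw [intervalIntegral.integral_add hi1 hi2, h4] at h3
  have h5 := int_exp_le ha0
  unfold Fk
  calc (1 / Real.pi) * ∫ θ in (0 : ℝ)..Real.pi, Cf θ n j * Real.cos (k * θ)
      ≤ (1 / Real.pi) * (1 / a + 1 / a) := by gcongr; linarith
    _ = 2 / j := by rw [ha]; field_simp; norm_num

/-- Paths from `z` to `x` in the half plane below the level `s`. -/
def HP (s : ℤ) (x z : Lat) : Set (List Dir) :=
  {m | z + disp m = x ∧ ∀ u, u <+: m → u ≠ m → (z + disp u).2 < s}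

lemma HP_trunc {s : ℤ} {x : Lat} (hx : x.2 = s) (n : ℕ) : ∀ (z : Lat) (j : ℕ), z.2 + j = s →
    W {m | m ∈ HP s x z ∧ m.length ≤ n} = ENNReal.ofReal (Fk n (z.1 - x.1) j) ∧
      0 ≤ Fk n (z.1 - x.1) j := by
  have h0 : ∀ (n : ℕ) (z : Lat), z.2 = s →
    W {m | m ∈ HP s x z ∧ m.length ≤ n} = ENNReal.ofReal (Fk n (z.1 - x.1) 0) ∧
      0 ≤ Fk n (z.1 - x.1) 0 := by
    intro n z hz
    have hnil : ∀ m ∈ HP s x z, m = [] := by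
      intro m hm
      by_contra hne
      have := hm.2 [] List.nil_prefix (fun h => hne h.symm)
      simp [hz] at this
    rw [Fk_zero_right]
    by_cases hzx : z = x
    · have : {m | m ∈ HP s x z ∧ m.length ≤ n} = {[]} := by
        ext m
        constructor
        · rintro ⟨hm, -⟩
          exact hnil m hm
        · rintro rfl
          exact ⟨⟨by simp [hzx], fun u hu hne => absurd (List.prefix_nil.1 hu) hne⟩, by simp⟩
      rw [this, W_nil]
      simp [hzx]
    · have : {m | m ∈ HP s x z ∧ m.length ≤ n} = ∅ := by
        ext m
        simp only [Set.mem_ofPred_eq, Set.mem_empty_iff_false, iff_false, not_and]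
        intro hm
        have := hnil m hm
        subst this
        exact absurd (by simpa using hm.1) hzx
      rw [this, W_empty]
      have : z.1 - x.1 ≠ 0 := fun h => hzx (Prod.ext (by omega) (by omega))
      simp [this]
  induction n with
  | zero =>
    intro z j hj
    cases j with
    | zero => exact h0 0 z (by simpa using hj)
    | succ j =>
      rw [Fk_zero_left]
      have : {m | m ∈ HP s x z ∧ m.length ≤ 0} = ∅ := by
        ext m
        simp only [Set.mem_ofPred_eq, Set.mem_empty_iff_false, iff_false, not_and]
        intro hm hl
        have : m = [] := by simpa using hl
        subst this
        have h1 : z = x := by simpa using hm.1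
        push_cast at hj
        rw [h1] at hj
        omega
      rw [this]
      simp
  | succ n ih =>
    intro z j hj
    cases j with
    | zero => exact h0 _ z (by simpa using hj)
    | succ j =>
      push_cast at hj
      have hrec : ∀ d : Dir, {m | d :: m ∈ {m | m ∈ HP s x z ∧ m.length ≤ n + 1}} =
          {m | m ∈ HP s x (z + vec d) ∧ m.length ≤ n} := by
        intro d
        ext m
        simp only [HP, Set.mem_ofPred_eq, disp_cons, ← add_assoc, List.length_cons,
          Nat.add_le_add_iff_right]
        refine and_congr (and_congr Iff.rfl
          ⟨fun h u hu hne => ?_, fun h u hu hne => ?_⟩) Iff.rfl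
        · have := h (d :: u) (by simpa using hu) (by simpa using hne)
          simpa [← add_assoc] using this
        · cases u with
          | nil => simp; omega
          | cons d' u =>
            rw [List.cons_prefix_cons] at hu
            obtain ⟨rfl, hu⟩ := hu
            have := h u hu (by simpa using hne)
            simpa [← add_assoc] using this
      have hnn : ([] : List Dir) ∉ {m | m ∈ HP s x z ∧ m.length ≤ n + 1} := by
        rintro ⟨hm, -⟩
        have h1 : z = x := by simpa using hm.1
        rw [h1] at hj
        omega
      rw [W_cons, if_neg hnn, zero_add]
      simp only [hrec, Fin.sum_univ_four]
      have e0 := ih (z + vec 0) (j + 1) (by simp [vec]; omega)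
      have e1 := ih (z + vec 1) j (by simp [vec]; omega)
      have e2 := ih (z + vec 2) (j + 1) (by simp [vec]; omega)
      have e3 := ih (z + vec 3) (j + 2) (by simp [vec]; omega)
      have i0 : (z + vec 0).1 - x.1 = z.1 - x.1 + 1 := by simp [vec]; ring
      have i1 : (z + vec 1).1 - x.1 = z.1 - x.1 := by simp [vec]
      have i2 : (z + vec 2).1 - x.1 = z.1 - x.1 - 1 := by simp [vec]; ring
      have i3 : (z + vec 3).1 - x.1 = z.1 - x.1 := by simp [vec]
      rw [i0] at e0
      rw [i1] at e1
      rw [i2] at e2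
      rw [i3] at e3
      have hF := Fk_succ n (z.1 - x.1) j
      refine ⟨?_, by linarith [e0.2, e1.2, e2.2, e3.2]⟩
      rw [e0.1, e1.1, e2.1, e3.1, ← ENNReal.ofReal_add e0.2 e1.2,
        ← ENNReal.ofReal_add (add_nonneg e0.2 e1.2) e2.2,
        ← ENNReal.ofReal_add (add_nonneg (add_nonneg e0.2 e1.2) e2.2) e3.2]
      have h4 : (4 : ℝ≥0∞)⁻¹ = ENNReal.ofReal (1 / 4) := by
        rw [one_div, ENNReal.ofReal_inv_of_pos (by norm_num)]
        simp
      rw [h4, ← ENNReal.ofReal_mul (by norm_num)]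
      congr 1
      linarith

lemma HP_mass {s : ℤ} {x z : Lat} (hx : x.2 = s) {j : ℕ} (hj : 0 < j) (hz : z.2 + j = s) :
    W (HP s x z) ≤ ENNReal.ofReal (2 / j) := by
  refine W_le_of_trunc fun n => ?_
  rw [(HP_trunc hx n z j hz).1]
  exact ENNReal.ofReal_le_ofReal (Fk_le n _ j hj)

/-- Paths from `z` to `x`, staying in the open box of radius `s` before the end. -/
def HB (s : ℤ) (x z : Lat) : Set (List Dir) :=
  {m | z + disp m = x ∧ ∀ u, u <+: m → u ≠ m → linf (z + disp u) < s}

lemma HB_mass {r s : ℤ} (hrs : r < s) {x z : Lat} (hx : linf x = s) (hz : linf z ≤ r) :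
    W (HB s x z) ≤ ENNReal.ofReal (2 / (s - r : ℤ)) := by
  obtain ⟨k, hk⟩ : ∃ k, (rotL k x).2 = s := by
    have h1 := le_linf.1 hx.ge
    have h2 := linf_le.1 hx.le
    rcases h1 with h | h | h | h
    · exact ⟨1, by simp [rotL]; omega⟩
    · exact ⟨3, by simp [rotL]; omega⟩
    · exact ⟨0, by simp [rotL]; omega⟩
    · exact ⟨2, by simp [rotL]; omega⟩
  have hz' := (linf_le.1 ((linf_rotL k z).le.trans hz))
  have hsub : HB s x z ⊆ {m | m.map (rotE k) ∈ HP s (rotL k x) (rotL k z)} := by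
    rintro m ⟨h1, h2⟩
    refine ⟨?_, ?_⟩
    · rw [disp_map_rot, ← rotL_add, h1]
    · intro u hu hne
      obtain ⟨v, hv, rfl⟩ := prefix_map_exists hu
      have := h2 v hv (fun h => hne (by rw [h]))
      rw [disp_map_rot, ← rotL_add]
      rw [← linf_rotL k] at this
      have := (linf_le.1 (Int.le_sub_one_of_lt this))
      omega
  refine (W_mono hsub).trans ?_
  rw [W_map]
  refine (HP_mass (j := (s - (rotL k z).2).toNat) hk (by omega) (by omega)).trans ?_
  apply ENNReal.ofReal_le_ofReal
  have h1 : (0 : ℝ) < (s - r : ℤ) := by exact_mod_cast (by omega : 0 < s - r)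
  have h2 : ((s - r : ℤ) : ℝ) ≤ ((s - (rotL k z).2).toNat : ℕ) := by
    have : s - r ≤ ((s - (rotL k z).2).toNat : ℤ) := by omega
    exact_mod_cast this
  gcongr

/-! ### Excursions -/

lemma linf_step (z : Lat) (d : Dir) : linf (z + vec d) ≤ linf z + 1 := by
  have h := linf_le.1 (le_refl (linf z))
  rw [linf_le]
  rcases vec_cases d with h1 | h1 | h1 | h1 <;> rw [h1] <;> simp <;> omega

lemma exists_hit {H : Set Lat} : ∀ (u m : List Dir) (z : Lat), u <+: m → z + disp u ∈ H →
    ∃ a b, m = a ++ b ∧ a ∈ Hit H z ∧ a <+: u := by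
  intro u
  induction u with
  | nil =>
    intro m z _ hz
    refine ⟨[], m, rfl, ?_, List.nil_prefix⟩
    rw [Hit_of_mem (by simpa using hz)]
    rfl
  | cons d u ih =>
    intro m z hu hz
    by_cases h : z ∈ H
    · refine ⟨[], m, rfl, ?_, List.nil_prefix⟩
      rw [Hit_of_mem h]
      rfl
    · obtain ⟨w, rfl⟩ := hu
      obtain ⟨a, b, h1, h2, h3⟩ := ih (u ++ w) (z + vec d) (List.prefix_append _ _)
        (by simpa [add_assoc] using hz)
      refine ⟨d :: a, b, by simp [h1], ?_, by simpa using h3⟩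
      rw [← Hit_cons h] at h2
      exact h2

/-- First hit of the inner box. -/
abbrev Inn (r : ℤ) (x : Lat) : Set (List Dir) := Hit {w | linf w ≤ r} x

/-- First hit of the complement of the open outer box. -/
abbrev Out (s : ℤ) (x : Lat) : Set (List Dir) := Hit {w | s ≤ linf w} x

/-- Excursions from the outer boundary to the inner box and back, containing no circuit. -/
def Exc (r s : ℤ) (x : Lat) : Set (List Dir) :=
  {m | m ∈ bindS (Inn r x) (fun a => Out s (x + disp a)) ∧ ¬ Good r s x m}

lemma out_linf {r s : ℤ} (hrs : r < s) {z : Lat} (hz : linf z ≤ r) {b : List Dir}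
    (hb : b ∈ Out s z) : linf (z + disp b) = s := by
  have h1 : s ≤ linf (z + disp b) := hb.1
  rcases List.eq_nil_or_concat b with rfl | ⟨u, d, rfl⟩
  · simp at h1; omega
  · have h2 : ¬ s ≤ linf (z + disp u) := hb.2 u (by simp) (by simp)
    have h3 := linf_step (z + disp u) d
    simp only [List.concat_eq_append, disp_append, disp_cons, disp_nil, add_zero] at *
    rw [← add_assoc] at *
    omega

lemma exc_linf {r s : ℤ} (hrs : r < s) {x : Lat} {m : List Dir} (hm : m ∈ Exc r s x) :
    linf (x + disp m) = s := by
  obtain ⟨⟨a, ha, b, hb, rfl⟩, -⟩ := hm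
  have := out_linf hrs (show linf (x + disp a) ≤ r from ha.1) hb
  simpa [add_assoc] using this

lemma exc_mass {r s : ℤ} {x : Lat} {p : ℝ≥0∞}
    (hp : Reach (fun m => Pth (fun w => r < linf (x + w)) m ∧ Good r s x m) p) :
    W (Exc r s x) ≤ 1 - p := by
  obtain ⟨G, hG1, hG2, hG3⟩ := hp
  have hE : PF (Exc r s x) := by
    intro a ha b hb
    exact PF_bind (PF_Hit _ _) (fun a _ => PF_Hit _ _) a ha.1 b hb.1
  have h1 : ∀ e ∈ Exc r s x, ∀ g ∈ G, ¬ e <+: g := by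
    rintro _ ⟨⟨a, ha, b, hb, rfl⟩, -⟩ g hg h
    have h2 : linf (x + disp a) ≤ r := ha.1
    have h3 := (hG3 g hg).1 a ((List.prefix_append a b).trans h)
    simp only at h3
    omega
  have h2 : ∀ e ∈ Exc r s x, ∀ g ∈ G, ¬ g <+: e := by
    rintro e ⟨-, he⟩ g hg ⟨b, rfl⟩
    exact he fun k => ((hG3 g hg).2 k).append_right b
  have hPF : PF (Exc r s x ∪ G) := by
    rintro a (ha | ha) b (hb | hb) hab
    · exact hE a ha b hb hab
    · exact absurd hab (h1 a ha b hb)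
    · exact absurd hab (h2 b hb a ha)
    · exact hG1 a ha b hb hab
  have hd : Disjoint (Exc r s x) G := by
    rw [Set.disjoint_left]
    intro a ha hb
    exact h1 a ha a hb List.prefix_rfl
  have h3 := kraft hPF
  rw [W_union_disj hd] at h3
  refine ENNReal.le_sub_of_add_le_right ?_ ((add_le_add_right hG2 _).trans h3)
  exact ne_top_of_le_ne_top (by simp) (hG2.trans (kraft hG1))

/-- Chains of excursions. -/
def Ch (r s : ℤ) : ℕ → Lat → Lat → Set (List Dir)
  | 0, x, y => {m | m ∈ Exc r s x ∧ x + disp m = y}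
  | j + 1, x, y => bindS (Exc r s x) (fun e => Ch r s j (x + disp e) y)

lemma Ch_mass {r s : ℤ} (hrs : r < s) {p : ℝ≥0∞}
    (hp : ∀ x, linf x = s →
      Reach (fun m => Pth (fun w => r < linf (x + w)) m ∧ Good r s x m) p) (j : ℕ) :
    ∀ x y, linf x = s → linf y = s →
      W (Ch r s j x y) ≤ (1 - p) ^ j * ENNReal.ofReal (2 / (s - r : ℤ)) := by
  induction j with
  | zero =>
    intro x y hx hy
    rw [pow_zero, one_mul]
    have hsub : Ch r s 0 x y ⊆ bindS (Inn r x) (fun a => HB s y (x + disp a)) := by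
      rintro _ ⟨⟨⟨a, ha, b, hb, rfl⟩, -⟩, h⟩
      refine ⟨a, ha, b, ⟨by simpa [add_assoc] using h, fun u hu hne => ?_⟩, rfl⟩
      have := hb.2 u hu hne
      simpa using this
    refine (W_mono hsub).trans ((W_bind_le fun a ha => HB_mass hrs hy ha.1).trans ?_)
    calc _ ≤ 1 * ENNReal.ofReal (2 / (s - r : ℤ)) := by
          gcongr; exact W_Hit_le _ _
      _ = _ := one_mul _
  | succ j ih =>
    intro x y hx hy
    rw [pow_succ']
    refine (W_bind_le fun e he => ih _ y (exc_linf hrs he) hy).trans ?_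
    rw [mul_assoc]
    gcongr
    exact exc_mass (hp x hx)

/-- All chains of excursions from `x` to `x`. -/
def ChAll (r s : ℤ) (x : Lat) : Set (List Dir) := ⋃ j, Ch r s j x x

lemma ChAll_mass {r s : ℤ} (hrs : r < s) {p : ℝ≥0∞} (hp1 : p ≤ 1)
    (hp : ∀ x, linf x = s →
      Reach (fun m => Pth (fun w => r < linf (x + w)) m ∧ Good r s x m) p)
    {x : Lat} (hx : linf x = s) :
    W (ChAll r s x) ≤ p⁻¹ * ENNReal.ofReal (2 / (s - r : ℤ)) := by
  refine (W_iUnion_le _).trans ?_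
  refine (ENNReal.tsum_le_tsum fun j => Ch_mass hrs hp j x x hx hx).trans ?_
  rw [ENNReal.tsum_mul_right, ENNReal.tsum_geometric,
    ENNReal.sub_sub_cancel (by simp) hp1]

lemma chain_decomp {r s : ℤ} (hrs : r < s) (n : ℕ) : ∀ (x : Lat) (u v : List Dir),
    (u ++ v).length ≤ n → linf x = s → linf (x + disp u) ≤ r → v ∈ Out s (x + disp u) →
    (∀ a e b, u ++ v = a ++ e ++ b → ¬ Good r s (x + disp a) e) →
    ∃ j, u ++ v ∈ Ch r s j x (x + disp (u ++ v)) := by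
  induction n with
  | zero =>
    intro x u v hl hx hu hv _
    have : u = [] := by
      cases u with
      | nil => rfl
      | cons => simp at hl
    subst this
    simp at hu
    omega
  | succ n ih =>
    intro x u v hl hx hu hv hbad
    obtain ⟨a, m', h1, ha, hau⟩ := exists_hit (H := {w | linf w ≤ r}) u (u ++ v) x
      (List.prefix_append u v) hu
    have ha0 : a ≠ [] := by
      rintro rfl
      have : linf (x + disp []) ≤ r := ha.1
      simp at this
      omega
    have hm' : (x + disp a) + disp m' ∈ {w | s ≤ linf w} := by
      have : s ≤ linf (x + disp u + disp v) := hv.1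
      rw [add_assoc, ← disp_append, h1, disp_append, ← add_assoc] at this
      exact this
    obtain ⟨b, m'', h2, hb, -⟩ := exists_hit (H := {w | s ≤ linf w}) m' m' (x + disp a)
      List.prefix_rfl hm'
    have hexc : a ++ b ∈ Exc r s x := by
      refine ⟨⟨a, ha, b, hb, rfl⟩, ?_⟩
      have := hbad [] (a ++ b) m'' (by rw [h1, h2]; simp)
      simpa using this
    have hpre : a ++ b <+: u ++ v := ⟨m'', by rw [h1, h2]; simp⟩
    rcases List.prefix_or_prefix_of_prefix hpre (List.prefix_append u v) with h | h
    · obtain ⟨u', rfl⟩ := h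
      have hx' := exc_linf hrs hexc
      obtain ⟨j, hj⟩ := ih (x + disp (a ++ b)) u' v (by
          have : 0 < a.length := List.length_pos_iff.2 ha0
          simp only [List.length_append] at hl ⊢
          omega) hx' (by simpa [add_assoc] using hu) (by simpa [add_assoc] using hv) (by
          intro a' e b' h
          have := hbad (a ++ b ++ a') e b' (by rw [List.append_assoc (a ++ b), h]; simp)
          simpa [add_assoc] using this)
      refine ⟨j + 1, a ++ b, hexc, u' ++ v, ?_, by simp⟩
      simpa [add_assoc] using hj
    · obtain ⟨v', hv'⟩ := h
      have hv'pre : v' <+: v := by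
        rw [← hv', List.prefix_append_right_inj] at hpre
        exact hpre
      have hvv : v' = v := by
        by_contra hne
        refine hv.2 v' hv'pre hne ?_
        have := exc_linf hrs hexc
        rw [← hv'] at this
        simp only [Set.mem_ofPred_eq]
        rw [add_assoc, ← disp_append]
        omega
      subst hvv
      refine ⟨0, ?_, rfl⟩
      rw [hv']
      exact hexc

/-! ### Loops -/

lemma adj_vec {a b : Lat} (h : Adj a b) : ∃ d, b = a + vec d := by
  unfold Adj at h
  have h1 : -1 ≤ a.1 - b.1 ∧ a.1 - b.1 ≤ 1 := by constructor <;> nlinarith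
  have h2 : -1 ≤ a.2 - b.2 ∧ a.2 - b.2 ≤ 1 := by constructor <;> nlinarith
  obtain ⟨x, hx⟩ : ∃ x, x = a.1 - b.1 := ⟨_, rfl⟩
  obtain ⟨y, hy⟩ : ∃ y, y = a.2 - b.2 := ⟨_, rfl⟩
  rw [← hx, ← hy] at h
  rw [← hx] at h1
  rw [← hy] at h2
  obtain ⟨h11, h12⟩ := h1
  obtain ⟨h21, h22⟩ := h2
  interval_cases x <;> interval_cases y <;> simp at h
  · exact ⟨0, by ext <;> simp [vec] <;> omega⟩
  · exact ⟨1, by ext <;> simp [vec] <;> omega⟩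
  · exact ⟨3, by ext <;> simp [vec] <;> omega⟩
  · exact ⟨2, by ext <;> simp [vec] <;> omega⟩

/-- Periodic parametrisation of a loop. -/
def lf (L : RootedLoop) (i : ℕ) : Lat := L.word.getD (i % L.word.length) 0

lemma lf_pos (L : RootedLoop) : 0 < L.word.length := List.length_pos_iff.2 L.ne

lemma lf_period (L : RootedLoop) (i : ℕ) : lf L (i + L.word.length) = lf L i := by
  simp [lf]

lemma lf_lt (L : RootedLoop) {i : ℕ} (hi : i < L.word.length) : lf L i = L.word[i] := by
  simp [lf, Nat.mod_eq_of_lt hi, hi]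

lemma lf_mod (L : RootedLoop) (i : ℕ) : lf L (i % L.word.length) = lf L i := by
  simp [lf]

lemma lf_cyc (L : RootedLoop) {i : ℕ} (hi : i ≤ L.word.length)
    (h : i < (L.word ++ L.word.take 1).length) : (L.word ++ L.word.take 1)[i] = lf L i := by
  rcases hi.lt_or_eq with h1 | h1
  · rw [List.getElem_append_left h1, lf_lt L h1]
  · subst h1
    rw [List.getElem_append_right (le_refl _)]
    have := lf_period L 0
    rw [zero_add] at this
    rw [this, lf_lt L (lf_pos L)]
    simp

lemma cyc_len (L : RootedLoop) : (L.word ++ L.word.take 1).length = L.word.length + 1 := by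
  have := lf_pos L
  simp; omega

lemma lf_succ_mod (L : RootedLoop) (i : ℕ) :
    lf L (i % L.word.length + 1) = lf L (i + 1) := by
  rw [← lf_mod, ← lf_mod L (i + 1)]
  simp [Nat.add_mod]

lemma lf_adj (L : RootedLoop) (i : ℕ) : Adj (lf L i) (lf L (i + 1)) := by
  have hi := Nat.mod_lt i (lf_pos L)
  have h := L.adj
  have hl := cyc_len L
  have h2 := List.isChain_iff_getElem.1 h (i % L.word.length) (by omega)
  rw [lf_cyc L (by omega), lf_cyc L (by omega), lf_mod, lf_succ_mod] at h2
  exact h2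

lemma lf_seg (L : RootedLoop) (i : ℕ) :
    segment ℝ (emb (lf L i)) (emb (lf L (i + 1))) ⊆ traceL (L.word ++ L.word.take 1) := by
  have hi := Nat.mod_lt i (lf_pos L)
  have hl := cyc_len L
  intro p hp
  right
  rw [Set.mem_iUnion₂]
  refine ⟨(lf L i, lf L (i + 1)), ?_, hp⟩
  rw [List.mem_iff_getElem]
  refine ⟨i % L.word.length, ?_, ?_⟩
  · simp only [List.length_zip, List.length_tail, hl]
    omega
  · rw [List.getElem_zip, List.getElem_tail, lf_cyc L (by omega), lf_cyc L (by omega), lf_mod,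
      lf_succ_mod]

lemma lf_rotate (L : RootedLoop) (i : ℕ) :
    L.word.rotate i = (List.range L.word.length).map (fun t => lf L (i + t)) := by
  apply List.ext_getElem
  · simp
  · intro t h1 h2
    rw [List.getElem_rotate]
    simp only [List.getElem_map, List.getElem_range]
    rw [← lf_mod, lf_lt]
    congr 1
    · rw [Nat.add_comm]
    · exact Nat.mod_lt _ (lf_pos L)

lemma mem_word (L : RootedLoop) {z : Lat} (h : z ∈ L.word) : ∃ i < L.word.length, lf L i = z := by
  obtain ⟨i, hi, rfl⟩ := List.mem_iff_getElem.1 h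
  exact ⟨i, hi, lf_lt L hi⟩

/-- Direction of the `i`-th step. -/
def ld (L : RootedLoop) (i : ℕ) : Dir := (adj_vec (lf_adj L i)).choose

lemma ld_spec (L : RootedLoop) (i : ℕ) : lf L (i + 1) = lf L i + vec (ld L i) :=
  (adj_vec (lf_adj L i)).choose_spec

/-- Window of the step sequence. -/
def lp (L : RootedLoop) (i k : ℕ) : List Dir := (List.range k).map fun t => ld L (i + t)

@[simp] lemma lp_length (L : RootedLoop) (i k : ℕ) : (lp L i k).length = k := by simp [lp]

lemma lp_add (L : RootedLoop) (i k k' : ℕ) : lp L i (k + k') = lp L i k ++ lp L (i + k) k' := by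
  simp only [lp, List.range_add, List.map_append, List.map_map]
  congr 1
  simp only [Function.comp_def, add_assoc]

lemma lp_disp (L : RootedLoop) (i k : ℕ) : lf L i + disp (lp L i k) = lf L (i + k) := by
  induction k with
  | zero => simp [lp]
  | succ k ih =>
    rw [lp_add, disp_append, ← add_assoc, ih, ← add_assoc, ld_spec]
    simp [lp]

lemma lp_take (L : RootedLoop) (i k t : ℕ) (h : t ≤ k) : (lp L i k).take t = lp L i t := by
  obtain ⟨t', rfl⟩ := Nat.exists_eq_add_of_le h
  rw [lp_add, List.take_append_of_le_length (by simp), List.take_of_length_le (by simp)]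

lemma lp_prefix (L : RootedLoop) {i k : ℕ} {u : List Dir} (h : u <+: lp L i k) :
    u = lp L i u.length := by
  have h1 := h.length_le
  rw [List.prefix_iff_eq_take] at h
  rw [lp_length] at h1
  rw [lp_take L i k _ h1] at h
  exact h

lemma lp_split (L : RootedLoop) {i k : ℕ} {a e b : List Dir} (h : lp L i k = a ++ e ++ b) :
    e = lp L (i + a.length) e.length := by
  have h1 : a ++ e <+: lp L i k := ⟨b, h.symm⟩
  have h2 := lp_prefix L h1
  rw [List.length_append, lp_add] at h2
  exact (List.append_inj h2 (by simp)).2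

/-- The set `A` contains a circuit of lattice segments around the annulus. -/
def GoodTrace (r s : ℤ) (A : Set Plane) : Prop :=
  ∀ k : Dir, ∃ (z : Lat) (v : List Dir), Cross r s (rotL k z) (v.map (rotE k)) ∧
    ∀ (u : List Dir) (d : Dir), u ++ [d] <+: v →
      segment ℝ (emb (z + disp u)) (emb (z + disp (u ++ [d]))) ⊆ A

lemma good_trace_of_good {r s : ℤ} (L : RootedLoop) {i k : ℕ}
    (h : Good r s (lf L i) (lp L i k)) :
    GoodTrace r s (traceL (L.word ++ L.word.take 1)) := by
  intro q
  obtain ⟨u, v, w, h1, h2⟩ := h q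
  refine ⟨_, v, h2, ?_⟩
  have hu := lp_prefix L (u := u) (i := i) (k := k) ⟨v ++ w, by rw [h1]; simp⟩
  have hv := lp_split L h1
  intro u' d hd
  rw [hv] at hd
  have h3 := lp_prefix L hd
  have h4 := lp_prefix L (u := u') ((List.prefix_append u' [d]).trans hd)
  rw [h3, h4, hu, lp_disp, lp_length, lp_disp, lp_disp]
  simp only [List.length_append, lp_length, List.length_singleton, ← add_assoc]
  exact lf_seg L _

/-- Bad loops. -/
def BadLoops (r s : ℤ) : Set ULoop :=
  {γ | (∃ z ∈ γ.out.word, linf z = r) ∧ (∃ z ∈ γ.out.word, linf z = s) ∧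
    ¬ GoodTrace r s (ULoop.trace γ)}

lemma bad_chain {r s : ℤ} (hrs : r < s) {γ : ULoop} (h : γ ∈ BadLoops r s) :
    ∃ i, linf (lf γ.out i) = s ∧ lp γ.out i γ.out.word.length ∈ ChAll r s (lf γ.out i) := by
  obtain ⟨⟨z, hz, hzr⟩, ⟨w, hw, hws⟩, hg⟩ := h
  set L := γ.out with hL
  set n := L.word.length with hn
  obtain ⟨i, hi, rfl⟩ := mem_word L hz
  obtain ⟨j, hj, rfl⟩ := mem_word L hw
  have hex : ∃ k, k ≤ n ∧ s ≤ linf (lf L (i + k)) := by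
    refine ⟨(j + n - i) % n, (Nat.mod_lt _ (lf_pos L)).le, ?_⟩
    rw [← lf_mod L (i + _)]
    have : (i + (j + n - i) % L.word.length) % L.word.length = j := by
      rw [← hn, Nat.add_mod_mod, show i + (j + n - i) = j + n by omega, Nat.add_mod_right,
        Nat.mod_eq_of_lt hj]
    rw [← hn] at this ⊢
    rw [this, hws]
  classical
  set k := Nat.find hex with hk
  obtain ⟨hkn, hks⟩ := Nat.find_spec hex
  rw [← hk] at hkn hks
  have hkmin : ∀ t < k, linf (lf L (i + t)) < s := by
    intro t ht
    have := Nat.find_min hex ht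
    push Not at this
    exact this (by omega)
  have hout : lp L i k ∈ Out s (lf L i) := by
    refine ⟨?_, ?_⟩
    · rw [lp_disp]; exact hks
    · intro u hu hne
      have h1 := lp_prefix L hu
      have h2 := hu.length_le
      have h3 : u.length < k := by
        rw [lp_length] at h2
        rcases h2.lt_or_eq with h | h
        · exact h
        · exact absurd (h ▸ h1) hne
      rw [h1, lp_disp]
      simpa using hkmin _ h3
  have hs : linf (lf L (i + k)) = s := by
    have := out_linf hrs hzr.le hout
    rwa [lp_disp] at this
  refine ⟨i + k, hs, ?_⟩
  have hsplit : lp L (i + k) n = lp L (i + k) (n - k) ++ lp L (i + n) k := by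
    have := lp_add L (i + k) (n - k) k
    rw [show n - k + k = n by omega, show i + k + (n - k) = i + n by omega] at this
    exact this
  have hper : lp L (i + n) k = lp L i k := by
    simp only [lp]
    refine List.map_congr_left fun t _ => ?_
    simp only [ld]
    have h1 : ∀ t, lf L (i + n + t) = lf L (i + t) := by
      intro t
      rw [show i + n + t = i + t + n by omega, lf_period]
    have h2 : ∀ a b c d : Lat, a = c → b = d → ∀ (h : ∃ e, b = a + vec e)
      (h' : ∃ e, d = c + vec e), h.choose = h'.choose := by
      rintro a b c d rfl rfl h h'
      rfl
    refine h2 _ _ _ _ (h1 _) ?_ _ _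
    rw [add_assoc, h1]
    rfl
  have hpos : lf L (i + k) + disp (lp L (i + k) (n - k)) = lf L i := by
    rw [lp_disp, show i + k + (n - k) = i + n by omega, lf_period]
  obtain ⟨q, hq⟩ := chain_decomp hrs _ (lf L (i + k)) (lp L (i + k) (n - k)) (lp L i k) le_rfl hs
    (by rw [hpos]; exact hzr.le) (by rw [hpos]; exact hout) (by
      intro a e b hab hG
      rw [← hper, ← hsplit] at hab
      have ha := lp_prefix L (u := a) (i := i + k) (k := n) ⟨e ++ b, by rw [hab]; simp⟩
      rw [lp_split L hab, ha, lp_disp, lp_length] at hG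
      exact hg (good_trace_of_good L hG))
  rw [← hper, ← hsplit, lp_disp, lf_period] at hq
  exact Set.mem_iUnion.2 ⟨q, hq⟩

lemma loop_inj {γ γ' : ULoop} {i i' : ℕ} (h0 : lf γ.out i = lf γ'.out i')
    (h : lp γ.out i γ.out.word.length = lp γ'.out i' γ'.out.word.length) : γ = γ' := by
  have hn : γ.out.word.length = γ'.out.word.length := by
    have := congrArg List.length h
    simpa using this
  have hr : γ.out.word.rotate i = γ'.out.word.rotate i' := by
    rw [lf_rotate, lf_rotate, ← hn]
    refine List.map_congr_left fun t ht => ?_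
    have ht' := List.mem_range.1 ht
    rw [← lp_disp, ← lp_disp, h0, ← lp_take _ i _ t ht'.le, ← lp_take _ i' _ t (hn ▸ ht'.le), h]
  have hrot : γ.out.word ~r γ'.out.word :=
    (List.IsRotated.symm ⟨i, rfl⟩ : γ.out.word.rotate i ~r γ.out.word).symm.trans
      (hr ▸ (List.IsRotated.symm ⟨i', rfl⟩))
  obtain ⟨k, hk⟩ := hrot
  have h1 : γ = Quot.mk _ γ.out := (Quot.out_eq γ).symm
  have h2 : γ' = Quot.mk _ γ'.out := (Quot.out_eq γ').symm
  rw [h1, h2]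
  exact Quot.sound ⟨k, hk.symm⟩

lemma loopWeight_le (γ : ULoop) : (loopWeight γ : ℝ≥0∞) ≤ 4⁻¹ ^ γ.out.word.length := by
  have : loopWeight γ ≤ 4⁻¹ ^ γ.steps := by
    unfold loopWeight
    rcases Nat.eq_zero_or_pos γ.mult with h | h
    · rw [h]; simp
    · apply div_le_self (by positivity)
      exact_mod_cast h
  refine (ENNReal.coe_le_coe.2 this).trans ?_
  rw [ENNReal.coe_pow, ENNReal.coe_inv (by norm_num)]
  exact le_rfl

lemma sphere_card {s : ℤ} (hs : 1 ≤ s) :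
    ∃ T : Finset Lat, (∀ x, linf x = s → x ∈ T) ∧ (T.card : ℤ) ≤ 12 * s := by
  classical
  let I := Finset.Icc (-s) s
  refine ⟨I.image (fun y => (s, y)) ∪ I.image (fun y => (-s, y)) ∪ I.image (fun x => (x, s)) ∪
    I.image (fun x => (x, -s)), ?_, ?_⟩
  · intro x hx
    have h1 := le_linf.1 hx.ge
    have h2 := linf_le.1 hx.le
    simp only [Finset.mem_union, Finset.mem_image, I, Finset.mem_Icc, Prod.ext_iff]
    rcases h1 with h | h | h | h
    · exact Or.inl (Or.inl (Or.inl ⟨x.2, by omega, by omega, rfl⟩))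
    · exact Or.inl (Or.inl (Or.inr ⟨x.2, by omega, by omega, rfl⟩))
    · exact Or.inl (Or.inr ⟨x.1, by omega, rfl, by omega⟩)
    · exact Or.inr ⟨x.1, by omega, rfl, by omega⟩
  · have hI : I.card = (2 * s + 1).toNat := by
      simp only [I, Int.card_Icc]; congr 1; ring
    have h1 := Finset.card_union_le (I.image (fun y => (s, y)) ∪ I.image (fun y => (-s, y)) ∪
      I.image (fun x => (x, s))) (I.image (fun x => (x, -s)))
    have h2 := Finset.card_union_le (I.image (fun y => (s, y)) ∪ I.image (fun y => (-s, y)))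
      (I.image (fun x => (x, s)))
    have h3 := Finset.card_union_le (I.image (fun y => (s, y))) (I.image (fun y => (-s, y)))
    have c1 := Finset.card_image_le (s := I) (f := fun y => (s, y))
    have c2 := Finset.card_image_le (s := I) (f := fun y => (-s, y))
    have c3 := Finset.card_image_le (s := I) (f := fun x => (x, s))
    have c4 := Finset.card_image_le (s := I) (f := fun x => (x, -s))
    omega

lemma bad_mass {r s l : ℤ} {N : ℕ} (hr : 1 ≤ r) (hrs : r < s) (hl : 1 ≤ l)
    (hls : 4 * (l - 1) ≤ s - r - 1) (hN : s ≤ N * l) (hN' : s ≤ N * (s - r)) :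
    nuMass (BadLoops r s) ≤ ENNReal.ofReal (24 * N * 8 ^ (80 * N)) := by
  have hp := fun x (hx : linf x = s) => reach_good hr hl hls hN hx
  obtain ⟨T, hT, hTc⟩ := sphere_card (by omega : 1 ≤ s)
  choose! i hi1 hi2 using fun γ (h : γ ∈ BadLoops r s) => bad_chain hrs h
  let S := (Σ x : {x : Lat // linf x = s}, ChAll r s x.1)
  let g : BadLoops r s → S := fun γ =>
    ⟨⟨lf γ.1.out (i γ.1), hi1 γ.1 γ.2⟩, ⟨_, hi2 γ.1 γ.2⟩⟩
  have hg : Function.Injective g := by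
    intro γ γ' h
    have h1 : (g γ).1.1 = (g γ').1.1 := by rw [h]
    have h2 : (g γ).2.1 = (g γ').2.1 := by rw [h]
    exact Subtype.ext (loop_inj h1 h2)
  have h1 : nuMass (BadLoops r s) ≤ ∑' x : S, (4 : ℝ≥0∞)⁻¹ ^ x.2.1.length := by
    refine le_trans ?_ (ENNReal.tsum_comp_le_tsum_of_injective hg
      (fun x : S => (4 : ℝ≥0∞)⁻¹ ^ x.2.1.length))
    refine ENNReal.tsum_le_tsum fun γ => ?_
    refine (loopWeight_le γ.1).trans ?_
    simp [g]
  refine h1.trans ?_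
  rw [ENNReal.tsum_sigma']
  set c := ((8⁻¹ : ℝ≥0∞) ^ (80 * N))⁻¹ * ENNReal.ofReal (2 / (s - r : ℤ)) with hc
  calc ∑' (x : {x : Lat // linf x = s}), ∑' (b : ChAll r s x.1), (4 : ℝ≥0∞)⁻¹ ^ b.1.length
      ≤ ∑' (x : {x : Lat // linf x = s}), c := by
        refine ENNReal.tsum_le_tsum fun x => ?_
        exact ChAll_mass hrs (pow_le_one' (by simp) _) hp x.2
    _ ≤ ∑' (x : T), c := by
        have hinj : Function.Injective
            (fun x : {x : Lat // linf x = s} => (⟨x.1, hT x.1 x.2⟩ : T)) := by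
          intro a b h
          exact Subtype.ext (congrArg (fun t : T => t.1) h)
        exact ENNReal.tsum_comp_le_tsum_of_injective hinj (fun _ : T => c)
    _ = T.card * c := by
        rw [tsum_fintype]; simp
    _ ≤ ENNReal.ofReal (24 * N * 8 ^ (80 * N)) := by
        have e1 : ((8⁻¹ : ℝ≥0∞) ^ (80 * N))⁻¹ = ENNReal.ofReal (8 ^ (80 * N)) := by
          rw [ENNReal.ofReal_pow (by norm_num), ENNReal.inv_pow, inv_inv]
          simp
        have e2 : (T.card : ℝ≥0∞) = ENNReal.ofReal T.card := by simp
        rw [hc, e1, e2, ← ENNReal.ofReal_mul (by positivity),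
          ← ENNReal.ofReal_mul (by positivity)]
        apply ENNReal.ofReal_le_ofReal
        have hd : (0 : ℝ) < (s - r : ℤ) := by exact_mod_cast (by omega : 0 < s - r)
        have h2 : (T.card : ℝ) ≤ 12 * s := by exact_mod_cast hTc
        have h3 : (s : ℝ) ≤ N * (s - r : ℤ) := by exact_mod_cast hN'
        have h4 : (T.card : ℝ) * (2 / (s - r : ℤ)) ≤ 24 * N := by
          rw [mul_div_assoc', div_le_iff₀ hd]
          linarith
        calc (T.card : ℝ) * (8 ^ (80 * N) * (2 / (s - r : ℤ)))
            = (T.card : ℝ) * (2 / (s - r : ℤ)) * 8 ^ (80 * N) := by ring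
          _ ≤ _ := by gcongr

/-! ### Planar topology -/

lemma ratio_slit {a b p : ℂ} (h : p ∉ segment ℝ a b) : (b - p) / (a - p) ∈ Complex.slitPlane := by
  have ha : a - p ≠ 0 := by
    intro h0
    apply h
    rw [← sub_eq_zero.1 h0]
    exact left_mem_segment ℝ a b
  by_contra hs
  rw [Complex.mem_slitPlane_iff, not_or, not_lt, not_ne_iff] at hs
  set l : ℝ := -((b - p) / (a - p)).re with hl
  have hl0 : 0 ≤ l := by linarith [hs.1]
  have he : (b - p) / (a - p) = ((-l : ℝ) : ℂ) := by
    apply Complex.ext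
    · simp [hl]
    · simpa using hs.2
  have he2 : b - p = -l * (a - p) := by
    rw [div_eq_iff ha] at he
    simpa using he
  apply h
  have hne : (1 + l : ℝ) ≠ 0 := by positivity
  have hne' : (1 + l : ℂ) ≠ 0 := by exact_mod_cast hne
  refine ⟨l / (1 + l), 1 / (1 + l), by positivity, by positivity, by field_simp; ring, ?_⟩
  simp only [Complex.real_smul]
  push_cast
  field_simp
  linear_combination he2

lemma abs_arg_le_of_re_nonneg {w : ℂ} (h : 0 ≤ w.re) : |w.arg| ≤ Real.pi / 2 :=
  Complex.abs_arg_le_pi_div_two_iff.2 h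

lemma ratio_arg {a b p c : ℂ} (hc : c ≠ 0) (h : p ∉ segment ℝ a b)
    (ha : 0 ≤ (c * (a - p)).re) (hb : 0 ≤ (c * (b - p)).re) :
    ((b - p) / (a - p)).arg = (c * (b - p)).arg - (c * (a - p)).arg := by
  have ha0 : a - p ≠ 0 := by
    intro h0
    apply h
    rw [← sub_eq_zero.1 h0]
    exact left_mem_segment ℝ a b
  have hb0 : b - p ≠ 0 := by
    intro h0
    apply h
    rw [← sub_eq_zero.1 h0]
    exact right_mem_segment ℝ a b
  have hr : ((b - p) / (a - p)) ≠ 0 := div_ne_zero hb0 ha0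
  have hs := ratio_slit h
  have hpi : ((b - p) / (a - p)).arg ≠ Real.pi := Complex.slitPlane_arg_ne_pi hs
  have h1 : ((c * (b - p)).arg : Real.Angle) =
      (((c * (a - p)).arg + ((b - p) / (a - p)).arg : ℝ) : Real.Angle) := by
    rw [Real.Angle.coe_add, ← Complex.arg_mul_coe_angle (mul_ne_zero hc ha0) hr]
    congr 2
    field_simp
  rw [Real.Angle.angle_eq_iff_two_pi_dvd_sub] at h1
  obtain ⟨k, hk⟩ := h1
  have e1 := abs_le.1 (abs_arg_le_of_re_nonneg ha)
  have e2 := abs_le.1 (abs_arg_le_of_re_nonneg hb)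
  have e3 := Complex.neg_pi_lt_arg ((b - p) / (a - p))
  have e4 := lt_of_le_of_ne (Complex.arg_le_pi ((b - p) / (a - p))) hpi
  have hpos := Real.pi_pos
  have hk0 : k = 0 := by
    have k1 : (k : ℝ) < 1 := by nlinarith
    have k2 : (-1 : ℝ) < k := by nlinarith
    have k1' : k < 1 := by exact_mod_cast k1
    have k2' : -1 < k := by exact_mod_cast k2
    omega
  rw [hk0] at hk
  simp at hk
  linarith

lemma exp_arg {z : ℂ} (hz : z ≠ 0) : Complex.exp (z.arg * Complex.I) = z / ‖z‖ := by
  have h : (‖z‖ : ℂ) ≠ 0 := by simpa using hz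
  rw [eq_div_iff h, mul_comm]
  exact Complex.norm_mul_exp_arg_mul_I z

lemma cross_lemma {s T : ℝ} (hs : 0 < s) (hT : 0 ≤ T) (a : ℕ → ℂ) (n : ℕ) (γ : ℝ → ℂ)
    (hγ : ContinuousOn γ (Icc 0 T)) (hre : ∀ t ∈ Icc 0 T, |(γ t).re| ≤ s)
    (ha0 : (a 0).re ≤ -s) (han : s ≤ (a n).re)
    (h0 : ∀ i ≤ n, (γ 0).im < (a i).im) (h1 : ∀ i ≤ n, (a i).im ≤ (γ T).im) :
    ∃ t ∈ Icc 0 T, ∃ i < n, γ t ∈ segment ℝ (a i) (a (i + 1)) := by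
  by_contra hcon
  push Not at hcon
  have hn : n ≠ 0 := by rintro rfl; linarith
  have hne : ∀ t ∈ Icc 0 T, ∀ i ≤ n, a i - γ t ≠ 0 := by
    intro t ht i hi h
    rw [sub_eq_zero] at h
    rcases hi.lt_or_eq with hi | rfl
    · exact hcon t ht i hi (h ▸ left_mem_segment ℝ _ _)
    · have := hcon t ht (i - 1) (by omega)
      rw [show i - 1 + 1 = i by omega] at this
      exact this (h ▸ right_mem_segment ℝ _ _)
  set ψ : ℝ → ℕ → ℝ := fun t k =>
    ∑ i ∈ Finset.range k, ((a (i + 1) - γ t) / (a i - γ t)).arg with hψ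
  set F : ℝ → ℝ := fun t => ψ t n - (a n - γ t).arg + (γ t - a 0).arg with hF
  have hcont : ContinuousOn F (Icc 0 T) := by
    refine ContinuousOn.add (ContinuousOn.sub ?_ ?_) ?_
    · refine continuousOn_finsetSum _ fun i hi => ?_
      have hi' := Finset.mem_range.1 hi
      intro t ht
      have hc := hγ t ht
      have hq : ContinuousWithinAt (fun t => (a (i + 1) - γ t) / (a i - γ t)) (Icc 0 T) t :=
        (continuousWithinAt_const.sub hc).div (continuousWithinAt_const.sub hc)
          (hne t ht i hi'.le)
      exact ContinuousAt.comp_continuousWithinAt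
        (f := fun t => (a (i + 1) - γ t) / (a i - γ t)) (g := Complex.arg)
        (Complex.continuousAt_arg (ratio_slit (hcon t ht i hi'))) hq
    · intro t ht
      refine (Complex.continuousAt_arg ?_).comp_continuousWithinAt
        (continuousWithinAt_const.sub (hγ t ht))
      have h2 := hne t ht n le_rfl
      have h3 := (abs_le.1 (hre t ht)).2
      rw [Complex.mem_slitPlane_iff]
      by_contra h4
      push Not at h4
      apply h2
      apply Complex.ext
      · simp at h4 ⊢; linarith [h4.1]
      · simpa using h4.2
    · intro t ht
      refine (Complex.continuousAt_arg ?_).comp_continuousWithinAt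
        ((hγ t ht).sub continuousWithinAt_const)
      have h2 := hne t ht 0 (Nat.zero_le _)
      have h3 := (abs_le.1 (hre t ht)).1
      rw [Complex.mem_slitPlane_iff]
      by_contra h4
      push Not at h4
      apply h2
      apply Complex.ext
      · simp at h4 ⊢; linarith [h4.1]
      · have := h4.2
        simp at this ⊢
        linarith
  have hexp : ∀ t ∈ Icc 0 T, Complex.exp (F t * Complex.I) = -1 := by
    intro t ht
    have hk : ∀ k ≤ n, Complex.exp (ψ t k * Complex.I) =
        ((a k - γ t) / ‖a k - γ t‖) / ((a 0 - γ t) / ‖a 0 - γ t‖) := by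
      intro k
      induction k with
      | zero =>
        intro _
        have h2 := hne t ht 0 (Nat.zero_le _)
        have h3 : (‖a 0 - γ t‖ : ℂ) ≠ 0 := by simpa using h2
        rw [div_self (div_ne_zero h2 h3)]
        simp [hψ]
      | succ k ih =>
        intro hk
        have e := ih (by omega)
        have h2 := hne t ht k (by omega)
        have h3 := hne t ht (k + 1) hk
        have h4 := hne t ht 0 (Nat.zero_le _)
        have n2 : (‖a k - γ t‖ : ℂ) ≠ 0 := by simpa using h2
        have n3 : (‖a (k + 1) - γ t‖ : ℂ) ≠ 0 := by simpa using h3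
        have n4 : (‖a 0 - γ t‖ : ℂ) ≠ 0 := by simpa using h4
        have e2 : ψ t (k + 1) = ψ t k + ((a (k + 1) - γ t) / (a k - γ t)).arg := by
          simp [hψ, Finset.sum_range_succ]
        rw [e2, Complex.ofReal_add, add_mul, Complex.exp_add, e, exp_arg (div_ne_zero h3 h2),
          norm_div]
        push_cast
        field_simp
    have h2 := hne t ht n le_rfl
    have h4 := hne t ht 0 (Nat.zero_le _)
    have h4' : γ t - a 0 ≠ 0 := by
      rw [← neg_sub]; exact neg_ne_zero.2 h4
    have n2 : (‖a n - γ t‖ : ℂ) ≠ 0 := by simpa using h2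
    have n4 : (‖a 0 - γ t‖ : ℂ) ≠ 0 := by simpa using h4
    simp only [hF]
    rw [Complex.ofReal_add, Complex.ofReal_sub, add_mul, sub_mul, Complex.exp_add,
      Complex.exp_sub, hk n le_rfl, exp_arg h2, exp_arg h4', norm_sub_rev (γ t) (a 0)]
    field_simp
    ring
  have hFne : ∀ t ∈ Icc 0 T, F t ≠ 0 := by
    intro t ht h
    have := hexp t ht
    rw [h] at this
    norm_num at this
  have tele : ∀ t ∈ Icc 0 T, ∀ c : ℂ, c ≠ 0 → (∀ i ≤ n, 0 ≤ (c * (a i - γ t)).re) →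
      ψ t n = (c * (a n - γ t)).arg - (c * (a 0 - γ t)).arg := by
    intro t ht c hc hpos
    have : ∀ k ≤ n, ψ t k = (c * (a k - γ t)).arg - (c * (a 0 - γ t)).arg := by
      intro k
      induction k with
      | zero => intro _; simp [hψ]
      | succ k ih =>
        intro hk
        have e2 : ψ t (k + 1) = ψ t k + ((a (k + 1) - γ t) / (a k - γ t)).arg := by
          simp [hψ, Finset.sum_range_succ]
        rw [e2, ih (by omega), ratio_arg hc (hcon t ht k (by omega)) (hpos k (by omega))
          (hpos _ hk)]
        ring
    exact this n le_rfl
  have hm0 : (0 : ℝ) ∈ Icc 0 T := ⟨le_rfl, hT⟩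
  have hm1 : T ∈ Icc 0 T := ⟨hT, le_rfl⟩
  have argle : ∀ w : ℂ, 0 ≤ w.re → w.im ≤ 0 → w.arg ≤ 0 := by
    intro w hw1 hw2
    rcases hw2.lt_or_eq with h | h
    · exact (Complex.arg_neg_iff.2 h).le
    · rw [Complex.arg_eq_zero_iff.2 ⟨hw1, h⟩]
  have hF0 : F 0 ≤ 0 := by
    have r1 := abs_le.1 (hre 0 hm0)
    have e := tele 0 hm0 (-Complex.I) (by simp) (fun i hi => by
      have := h0 i hi
      simp; linarith)
    have i0 := h0 0 (Nat.zero_le _)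
    have i1 := h0 n le_rfl
    have a1 : (-Complex.I * (a n - γ 0)).arg ≤ 0 := argle _ (by simp; linarith) (by simp; linarith)
    have a2 : 0 ≤ (-Complex.I * (a 0 - γ 0)).arg := Complex.arg_nonneg_iff.2 (by simp; linarith)
    have a3 : 0 ≤ (a n - γ 0).arg := Complex.arg_nonneg_iff.2 (by simp; linarith)
    have a4 : (γ 0 - a 0).arg ≤ 0 := argle _ (by simp; linarith) (by simp; linarith)
    simp only [hF]
    linarith
  have hF1 : 0 ≤ F T := by
    have r1 := abs_le.1 (hre T hm1)
    have e := tele T hm1 Complex.I (by simp) (fun i hi => by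
      have := h1 i hi
      simp; linarith)
    have i0 := h1 0 (Nat.zero_le _)
    have i1 := h1 n le_rfl
    have a1 : 0 ≤ (Complex.I * (a n - γ T)).arg := Complex.arg_nonneg_iff.2 (by simp; linarith)
    have a2 : (Complex.I * (a 0 - γ T)).arg ≤ 0 := argle _ (by simp; linarith) (by simp; linarith)
    have a3 : (a n - γ T).arg ≤ 0 := argle _ (by simp; linarith) (by simp; linarith)
    have a4 : 0 ≤ (γ T - a 0).arg := Complex.arg_nonneg_iff.2 (by simp; linarith)
    simp only [hF]
    linarith
  obtain ⟨t, ht, ht0⟩ := intermediate_value_Icc hT hcont ⟨hF0, hF1⟩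
  exact hFne t ht ht0

/-- The plane as `ℂ`, rotated. -/
def Phi (k : Dir) (p : Plane) : ℂ :=
  ![(⟨p 0, p 1⟩ : ℂ), ⟨-p 1, p 0⟩, ⟨-p 0, -p 1⟩, ⟨p 1, -p 0⟩] k

@[simp] lemma emb_zero (z : Lat) : emb z 0 = z.1 := rfl
@[simp] lemma emb_one (z : Lat) : emb z 1 = z.2 := rfl

lemma Phi_emb (k : Dir) (z : Lat) : Phi k (emb z) = ⟨(rotL k z).1, (rotL k z).2⟩ := by
  fin_cases k <;> simp [Phi, rotL]

lemma Phi_segment {k : Dir} {p a b : Plane} (h : Phi k p ∈ segment ℝ (Phi k a) (Phi k b)) :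
    p ∈ segment ℝ a b := by
  obtain ⟨α, β, hα, hβ, hab, h⟩ := h
  refine ⟨α, β, hα, hβ, hab, ?_⟩
  rw [Complex.ext_iff] at h
  obtain ⟨h1, h2⟩ := h
  ext i
  fin_cases k <;> fin_cases i <;> simp [Phi] at h1 h2 ⊢ <;> linarith

lemma Phi_cont (k : Dir) : Continuous (Phi k) := by
  have h0 : Continuous fun p : Plane => p 0 := by fun_prop
  have h1 : Continuous fun p : Plane => p 1 := by fun_prop
  have key : ∀ f g : Plane → ℝ, Continuous f → Continuous g →
      Continuous fun p => (⟨f p, g p⟩ : ℂ) := by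
    intro f g hf hg
    have : (fun p => (⟨f p, g p⟩ : ℂ)) = fun p => (f p : ℂ) + (g p : ℂ) * Complex.I := by
      ext p
      apply Complex.ext <;> simp
    rw [this]
    fun_prop
  fin_cases k
  · exact key _ _ h0 h1
  · exact key _ _ h1.neg h0
  · exact key _ _ h0.neg h1.neg
  · exact key _ _ h1 h0.neg

/-- Sup norm in the plane. -/
def supn (p : Plane) : ℝ := max |p 0| |p 1|

lemma supn_cont : Continuous supn := by
  unfold supn; fun_prop

lemma supn_emb (z : Lat) : supn (emb z) = linf z := by
  simp [supn, linf]

lemma Phi_le (k : Dir) (p : Plane) : |(Phi k p).re| ≤ supn p ∧ (Phi k p).im ≤ supn p := by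
  have h0 := le_max_left |p 0| |p 1|
  have h1 := le_max_right |p 0| |p 1|
  have e0 := abs_le.1 h0
  have e1 := abs_le.1 h1
  unfold supn
  fin_cases k
  · exact ⟨h0, e1.2⟩
  · exact ⟨(abs_neg (p 1)).trans_le h1, e0.2⟩
  · exact ⟨(abs_neg (p 0)).trans_le h0, neg_le.1 e1.1⟩
  · exact ⟨h1, neg_le.1 e0.1⟩

lemma Phi_ex (p : Plane) : ∃ k : Dir, (Phi k p).im = supn p := by
  unfold supn
  rcases max_choice |p 0| |p 1| with h | h <;> rw [h]
  · rcases abs_choice (p 0) with h | h <;> rw [h]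
    · exact ⟨1, rfl⟩
    · exact ⟨3, rfl⟩
  · rcases abs_choice (p 1) with h | h <;> rw [h]
    · exact ⟨0, rfl⟩
    · exact ⟨2, rfl⟩

lemma circuit {r s : ℤ} {A : Set Plane} (hG : GoodTrace r s A) (hr : 1 ≤ r) (hrs : r < s)
    {γ : ℝ → Plane} (hγ : ContinuousOn γ (Icc 0 1)) (h0 : supn (γ 0) < r + 1)
    (h1 : s ≤ supn (γ 1)) : ∃ t ∈ Icc (0 : ℝ) 1, γ t ∈ A := by
  have hrs' : (r : ℝ) + 1 ≤ s := by exact_mod_cast hrs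
  have hs0 : (0 : ℝ) < s := by exact_mod_cast (by omega : 0 < s)
  have hc : ContinuousOn (fun t => supn (γ t)) (Icc 0 1) := supn_cont.comp_continuousOn hγ
  have hK : IsCompact (Icc (0 : ℝ) 1 ∩ (fun t => supn (γ t)) ⁻¹' {(s : ℝ)}) :=
    isCompact_Icc.of_isClosed_subset
      (hc.preimage_isClosed_of_isClosed isClosed_Icc isClosed_singleton) inter_subset_left
  have hne : (Icc (0 : ℝ) 1 ∩ (fun t => supn (γ t)) ⁻¹' {(s : ℝ)}).Nonempty := by
    obtain ⟨t, ht, hts⟩ := intermediate_value_Icc (zero_le_one' ℝ) hc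
      (show (s : ℝ) ∈ Icc (supn (γ 0)) (supn (γ 1)) from ⟨by linarith, h1⟩)
    exact ⟨t, ht, hts⟩
  obtain ⟨τ, ⟨hτ, hτs⟩, hmin⟩ := hK.exists_isLeast hne
  have hτs' : supn (γ τ) = s := hτs
  have hlt : ∀ t ∈ Icc 0 τ, supn (γ t) ≤ s := by
    intro t ht
    by_contra hcon
    push Not at hcon
    have hsub : Icc 0 t ⊆ Icc (0 : ℝ) 1 := Icc_subset_Icc le_rfl (ht.2.trans hτ.2)
    obtain ⟨u, hu, hus⟩ := intermediate_value_Icc ht.1 (hc.mono hsub)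
      (show (s : ℝ) ∈ Icc (supn (γ 0)) (supn (γ t)) from ⟨by linarith, hcon.le⟩)
    have h3 := hmin ⟨hsub hu, hus⟩
    have h4 : t = τ := le_antisymm ht.2 (h3.trans hu.2)
    rw [h4] at hcon
    linarith
  obtain ⟨k, hk⟩ := Phi_ex (γ τ)
  obtain ⟨z, v, ⟨hP, hz1, hz2⟩, hseg⟩ := hG k
  have him : ∀ i, (r : ℝ) + 1 ≤ (Phi k (emb (z + disp (v.take i)))).im ∧
      (Phi k (emb (z + disp (v.take i)))).im ≤ s := by
    intro i
    have := hP ((v.take i).map (rotE k)) ((List.take_prefix i v).map _)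
    rw [disp_map_rot, ← rotL_add] at this
    rw [Phi_emb]
    dsimp only
    exact ⟨by exact_mod_cast this.1, by exact_mod_cast this.2⟩
  have hsub : Icc 0 τ ⊆ Icc (0 : ℝ) 1 := Icc_subset_Icc le_rfl hτ.2
  obtain ⟨t, ht, i, hi, hm⟩ := cross_lemma hs0 hτ.1
    (fun i => Phi k (emb (z + disp (v.take i)))) v.length (fun t => Phi k (γ t))
    ((Phi_cont k).comp_continuousOn (hγ.mono hsub))
    (fun t ht => (Phi_le k _).1.trans (hlt t ht))
    (by
      simp only [List.take_zero, disp_nil, add_zero, Phi_emb]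
      exact_mod_cast hz1)
    (by
      simp only [List.take_length, Phi_emb]
      rw [disp_map_rot, ← rotL_add] at hz2
      exact_mod_cast hz2)
    (fun i _ => by
      have := (Phi_le k (γ 0)).2
      have := (him i).1
      linarith)
    (fun i _ => by
      have := (him i).2
      linarith)
  refine ⟨t, hsub ht, ?_⟩
  have e : v.take (i + 1) = v.take i ++ [v[i]] := (List.take_concat_get' v i hi).symm
  refine hseg (v.take i) v[i] (e ▸ List.take_prefix _ _) ?_
  rw [← e]
  exact Phi_segment hm

lemma bdry_linf {R : ℤ} {z : Lat} (h : z ∈ bdry (box 0 R)) : linf z = R := by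
  obtain ⟨h1, w, h2, h3⟩ := h
  simp only [box, Set.mem_ofPred_eq, sub_zero] at h1 h2
  simp only [linf, Prod.fst_sub, Prod.snd_sub] at *
  simp only [abs, max_def] at *
  grind

lemma good_disconnects {r s : ℤ} {A : Set Plane} (hG : GoodTrace r s A) (hr : 1 ≤ r)
    (hrs : r < s) : Disconnects A (embS (box 0 r)) (bdryE 0 s) := by
  intro γ hγ h0 h1
  obtain ⟨z, hz, hz0⟩ := h0
  obtain ⟨w, hw, hw1⟩ := h1
  refine circuit hG hr hrs hγ ?_ ?_
  · rw [← hz0, supn_emb]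
    simp only [box, Set.mem_ofPred_eq, sub_zero] at hz
    exact_mod_cast (by omega : linf z < r + 1)
  · rw [← hw1, supn_emb, bdry_linf hw]

lemma traceL_closed (l : List Lat) : IsClosed (traceL l) := by
  refine IsClosed.union ?_ ?_
  · have : (⋃ z ∈ l, ({emb z} : Set Plane)) = ⋃ z ∈ l.toFinset, {emb z} := by simp
    rw [this]
    exact isClosed_biUnion_finset fun _ _ => isClosed_singleton
  · have : (⋃ p ∈ l.zip l.tail, segment ℝ (emb p.1) (emb p.2)) =
        ⋃ p ∈ (l.zip l.tail).toFinset, segment ℝ (emb p.1) (emb p.2) := by simp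
    rw [this]
    refine isClosed_biUnion_finset fun p _ => ?_
    rw [← convexHull_pair]
    exact ((Set.toFinite _).isCompact_convexHull ℝ).isClosed

lemma zip_tail_adj {l : List Lat} (h : l.IsChain Adj) :
    ∀ p ∈ l.zip l.tail, Adj p.1 p.2 := by
  induction l with
  | nil => simp
  | cons a l ih =>
    cases l with
    | nil => simp
    | cons b l =>
      rw [List.isChain_cons_cons] at h
      intro p hp
      simp only [List.tail_cons, List.zip_cons_cons, List.mem_cons] at hp
      rcases hp with rfl | hp
      · exact h.1
      · exact ih h.2 p (by simpa using hp)

lemma seg_lattice {a b z : Lat} (h : Adj a b) (hz : emb z ∈ segment ℝ (emb a) (emb b)) :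
    z = a ∨ z = b := by
  obtain ⟨α, β, hα, hβ, hab, he⟩ := hz
  have h0 : α * a.1 + β * b.1 = z.1 := by
    have := congrArg (fun p : Plane => p 0) he
    simpa using this
  have h1 : α * a.2 + β * b.2 = z.2 := by
    have := congrArg (fun p : Plane => p 1) he
    simpa using this
  obtain rfl : α = 1 - β := by linarith
  have key : ∀ e : ℤ, (e : ℝ) = β → e = 0 ∨ e = 1 := by
    intro e he
    have h1 : (0 : ℝ) ≤ e := by linarith
    have h2 : (e : ℝ) ≤ 1 := by linarith
    have h1' : 0 ≤ e := by exact_mod_cast h1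
    have h2' : e ≤ 1 := by exact_mod_cast h2
    omega
  have hb : ∃ e : ℤ, (e : ℝ) = β := by
    have hreal : ((a.1 : ℝ) - b.1) ^ 2 + ((a.2 : ℝ) - b.2) ^ 2 = 1 := by exact_mod_cast h
    refine ⟨(b.1 - a.1) * (z.1 - a.1) + (b.2 - a.2) * (z.2 - a.2), ?_⟩
    push_cast
    rw [← h0, ← h1]
    linear_combination β * hreal
  obtain ⟨e, he⟩ := hb
  rcases key e he with rfl | rfl
  · left
    norm_num at he
    subst he
    refine Prod.ext ?_ ?_
    · have : (z.1 : ℝ) = a.1 := by linarith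
      exact_mod_cast this
    · have : (z.2 : ℝ) = a.2 := by linarith
      exact_mod_cast this
  · right
    norm_num at he
    subst he
    refine Prod.ext ?_ ?_
    · have : (z.1 : ℝ) = b.1 := by linarith
      exact_mod_cast this
    · have : (z.2 : ℝ) = b.2 := by linarith
      exact_mod_cast this

lemma emb_inj {a b : Lat} (h : emb a = emb b) : a = b := by
  have h0 := congrArg (fun p : Plane => p 0) h
  have h1 := congrArg (fun p : Plane => p 1) h
  simp at h0 h1
  exact Prod.ext h0 h1

lemma mem_of_trace {γ : ULoop} {z : Lat} (h : emb z ∈ ULoop.trace γ) : z ∈ γ.out.word := by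
  have hw : ∀ x, x ∈ γ.out.word ++ γ.out.word.take 1 → x ∈ γ.out.word := by
    intro x hx
    rcases List.mem_append.1 hx with hx | hx
    · exact hx
    · exact List.mem_of_mem_take hx
  apply hw
  rcases h with h | h
  · simp only [mem_iUnion, mem_singleton_iff] at h
    obtain ⟨x, hx, hxe⟩ := h
    rw [emb_inj hxe]
    exact hx
  · simp only [mem_iUnion] at h
    obtain ⟨p, hp, hs⟩ := h
    have hz := List.of_mem_zip hp
    rcases seg_lattice (zip_tail_adj γ.out.adj p hp) hs with rfl | rfl
    · exact hz.1
    · exact List.mem_of_mem_tail hz.2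

lemma not_fill {A : Set Plane} (hA : IsClosed A) {p : Plane} (h : p ∉ Fill A) :
    ∃ C : Set Plane, C ⊆ Aᶜ ∧ IsConnected C ∧ p ∈ C ∧ ¬ Bornology.IsBounded C := by
  simp only [Fill, Set.mem_ofPred_eq, hA.closure_eq] at h
  push Not at h
  exact h

lemma frontier_fill {A : Set Plane} (hA : IsClosed A) : frontier (Fill A) ⊆ A := by
  intro x hx
  by_contra hxA
  obtain ⟨ε, hε, hb⟩ := Metric.isOpen_iff.1 hA.isOpen_compl x hxA
  rw [frontier_eq_closure_inter_closure] at hx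
  have hn := Metric.ball_mem_nhds x hε
  obtain ⟨p, hpB, hp⟩ := mem_closure_iff_nhds.1 hx.2 _ hn
  obtain ⟨q, hqB, hq⟩ := mem_closure_iff_nhds.1 hx.1 _ hn
  obtain ⟨C, hC1, hC2, hC3, hC4⟩ := not_fill hA hp
  apply hC4
  have hconn : IsConnected (C ∪ Metric.ball x ε) :=
    IsConnected.union ⟨p, hC3, hpB⟩ hC2
      ((convex_ball x ε).isConnected ⟨x, Metric.mem_ball_self hε⟩)
  exact (hq (C ∪ Metric.ball x ε) (by rw [hA.closure_eq]; exact union_subset hC1 hb) hconn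
    (Or.inr hqB)).subset subset_union_left

lemma bounded_supn {C : Set Plane} {s : ℝ} (h : ∀ q ∈ C, supn q < s) :
    Bornology.IsBounded C := by
  refine (Metric.isBounded_closedBall (x := (0 : Plane)) (r := 2 * s)).subset ?_
  intro q hq
  have h1 := h q hq
  have h2 := le_max_left |q 0| |q 1|
  have h3 := le_max_right |q 0| |q 1|
  unfold supn at h1
  rw [mem_closedBall_zero_iff, EuclideanSpace.norm_eq]
  apply Real.sqrt_le_iff.2
  have := abs_nonneg (q 0)
  have := abs_nonneg (q 1)
  refine ⟨by linarith, ?_⟩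
  simp only [Fin.sum_univ_two, Real.norm_eq_abs]
  nlinarith

lemma good_frontier {r s : ℤ} {A : Set Plane} (hA : IsClosed A) (hG : GoodTrace r s A)
    (hr : 1 ≤ r) (hrs : r < s) {z : Lat} (hz : linf z = r) : emb z ∉ frontier (Fill A) := by
  intro hf
  rw [frontier_eq_closure_inter_closure] at hf
  have hopen : IsOpen {p : Plane | supn p < r + 1} := isOpen_lt supn_cont continuous_const
  have hzm : emb z ∈ {p : Plane | supn p < r + 1} := by
    simp only [Set.mem_ofPred_eq]
    rw [supn_emb, hz]
    linarith
  obtain ⟨p, hpB, hp⟩ := mem_closure_iff_nhds.1 hf.2 _ (hopen.mem_nhds hzm)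
  obtain ⟨C, hC1, hC2, hC3, hC4⟩ := not_fill hA hp
  have hq : ∃ q ∈ C, (s : ℝ) ≤ supn q := by
    by_contra hcon
    push Not at hcon
    exact hC4 (bounded_supn hcon)
  obtain ⟨q, hqC, hqs⟩ := hq
  have hpA : p ∈ Aᶜ := hC1 hC3
  have hU : IsOpen (connectedComponentIn Aᶜ p) := hA.isOpen_compl.connectedComponentIn
  have hUc : IsConnected (connectedComponentIn Aᶜ p) := isConnected_connectedComponentIn_iff.2 hpA
  have hqU : q ∈ connectedComponentIn Aᶜ p :=
    hC2.isPreconnected.subset_connectedComponentIn hC3 hC1 hqC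
  have hpath := (hU.isConnected_iff_isPathConnected).1 hUc
  have hj := hpath.joinedIn p (mem_connectedComponentIn hpA) q hqU
  obtain ⟨t, ht, htA⟩ := circuit hG hr hrs (γ := fun t => hj.somePath.extend t)
    hj.somePath.continuous_extend.continuousOn (by simpa using hpB) (by simpa using hqs)
  have h3 := hj.somePath_mem ⟨t, ht⟩
  have h4 := connectedComponentIn_subset _ _ h3
  apply h4
  have e : hj.somePath.extend t = hj.somePath ⟨t, ht⟩ := by
    simp [Path.extend_apply, ht]
  rw [← e]
  exact htA

lemma bad_of_trace {r s : ℤ} {γ : ULoop} (hr : 1 ≤ r) (hrs : r < s)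
    (h : CrossesAnn (ULoop.trace γ) 0 r s)
    (hd : ¬ Disconnects (ULoop.trace γ) (embS (box 0 r)) (bdryE 0 s)) : γ ∈ BadLoops r s := by
  obtain ⟨⟨_, h1, a, ha, rfl⟩, ⟨_, h2, b, hb, rfl⟩⟩ := h
  exact ⟨⟨a, mem_of_trace h1, bdry_linf ha⟩, ⟨b, mem_of_trace h2, bdry_linf hb⟩,
    fun hG => hd (good_disconnects hG hr hrs)⟩

lemma bad_of_frontier {r s : ℤ} {γ : ULoop} (hr : 1 ≤ r) (hrs : r < s)
    (h : CrossesAnn (loopFrontier γ) 0 r s) : γ ∈ BadLoops r s := by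
  have hcl : IsClosed (ULoop.trace γ) := traceL_closed _
  obtain ⟨⟨_, h1, a, ha, rfl⟩, ⟨_, h2, b, hb, rfl⟩⟩ := h
  exact ⟨⟨a, mem_of_trace (frontier_fill hcl h1), bdry_linf ha⟩,
    ⟨b, mem_of_trace (frontier_fill hcl h2), bdry_linf hb⟩,
    fun hG => good_frontier hcl hG hr hrs (bdry_linf ha) h1⟩

/-! ### The Poisson bound -/

instance : Countable RootedLoop := by
  have : Function.Injective RootedLoop.word := by
    rintro ⟨a, _, _⟩ ⟨b, _, _⟩ h
    simp only at h
    subst h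
    rfl
  exact this.countable

instance : Countable ULoop := by
  unfold ULoop
  infer_instance

lemma void_finite {D : Set Lat} {α : ℝ} {P : Measure Config} (hα : 0 < α) (hα' : α ≤ 1 / 2)
    (hP : IsLoopSoup D α P) {B : Set ULoop} {M : ℝ} (hM : 0 ≤ M)
    (hB : nuMass B ≤ ENNReal.ofReal M) (s : Finset ULoop) (hs : ∀ γ ∈ s, γ ∈ B) :
    ENNReal.ofReal (Real.exp (-M)) ≤ P {ω | ∀ γ ∈ s, ω γ = 0} := by
  have h := hP.2 s (fun _ => 0)
  rw [h]
  have e : ∀ x : ℝ≥0, poissonProb x 0 = ENNReal.ofReal (Real.exp (-(x : ℝ))) := by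
    intro x; simp [poissonProb]
  simp only [e]
  rw [← ENNReal.ofReal_prod_of_nonneg (fun _ _ => (Real.exp_pos _).le), ← Real.exp_sum]
  apply ENNReal.ofReal_le_ofReal
  apply Real.exp_le_exp.2
  rw [Finset.sum_neg_distrib]
  apply neg_le_neg
  have hsum : ∑ γ ∈ s, (loopWeight γ : ℝ) ≤ M := by
    have h1 : (∑ γ ∈ s, (loopWeight γ : ℝ≥0∞)) ≤ nuMass B := by
      unfold nuMass
      rw [tsum_subtype B (fun γ => (loopWeight γ : ℝ≥0∞))]
      refine le_trans (le_of_eq ?_) (ENNReal.sum_le_tsum s)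
      refine Finset.sum_congr rfl fun γ hγ => ?_
      rw [Set.indicator_of_mem (hs γ hγ)]
    have h2 := h1.trans hB
    have h3 : (∑ γ ∈ s, (loopWeight γ : ℝ≥0∞)) = ENNReal.ofReal (∑ γ ∈ s, (loopWeight γ : ℝ)) := by
      rw [ENNReal.ofReal_sum_of_nonneg (fun _ _ => NNReal.coe_nonneg _)]
      simp
    rw [h3] at h2
    exact (ENNReal.ofReal_le_ofReal_iff hM).1 h2
  refine le_trans (Finset.sum_le_sum fun γ _ => ?_) hsum
  rw [NNReal.coe_mul, Real.coe_toNNReal _ hα.le]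
  have h4 : (nuD D γ : ℝ) ≤ loopWeight γ := by
    unfold nuD
    split_ifs
    · exact le_rfl
    · exact NNReal.coe_nonneg _
  have h5 : (0 : ℝ) ≤ nuD D γ := NNReal.coe_nonneg _
  nlinarith

lemma void_prob {D : Set Lat} {α : ℝ} {P : Measure Config} (hα : 0 < α) (hα' : α ≤ 1 / 2)
    (hP : IsLoopSoup D α P) {B : Set ULoop} {M : ℝ} (hM : 0 ≤ M)
    (hB : nuMass B ≤ ENNReal.ofReal M) :
    ENNReal.ofReal (Real.exp (-M)) ≤ P {ω | ∀ γ ∈ B, ω γ = 0} := by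
  haveI := hP.1
  rcases B.eq_empty_or_nonempty with rfl | hne
  · have := void_finite hα hα' hP hM hB ∅ (by simp)
    simpa using this
  obtain ⟨f, hf⟩ := (Set.to_countable B).exists_eq_range hne
  have hset : {ω : Config | ∀ γ ∈ B, ω γ = 0} =
      ⋂ n : ℕ, {ω : Config | ∀ γ ∈ (Finset.range n).image f, ω γ = 0} := by
    ext ω
    simp only [hf, Set.mem_ofPred_eq, mem_iInter, Finset.mem_image, Set.mem_range]
    constructor
    · rintro h n γ ⟨i, _, rfl⟩
      exact h _ ⟨i, rfl⟩
    · rintro h γ ⟨i, rfl⟩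
      exact h (i + 1) _ ⟨i, by simp, rfl⟩
  have hmeas : ∀ s : Finset ULoop, MeasurableSet {ω : Config | ∀ γ ∈ s, ω γ = 0} := by
    intro s
    have : {ω : Config | ∀ γ ∈ s, ω γ = 0} = ⋂ γ ∈ s, {ω : Config | ω γ = 0} := by
      ext ω; simp
    rw [this]
    refine Finset.measurableSet_biInter s fun γ _ => ?_
    exact (measurable_pi_apply γ) (measurableSet_singleton 0)
  have hanti : Antitone fun n : ℕ => {ω : Config | ∀ γ ∈ (Finset.range n).image f, ω γ = 0} := by
    intro m n hmn ω hω γ hγ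
    exact hω γ (Finset.image_subset_image (Finset.range_mono hmn) hγ)
  rw [hset, hanti.measure_iInter (fun n => (hmeas _).nullMeasurableSet) ⟨0, measure_ne_top _ _⟩]
  exact le_iInf fun n => void_finite hα hα' hP hM hB _ (by
    intro γ hγ
    rw [hf]
    obtain ⟨i, _, rfl⟩ := Finset.mem_image.1 hγ
    exact ⟨i, rfl⟩)

lemma params {δ : ℝ} (hδ : 0 < δ) {r : ℤ} (hr : 1 ≤ r) (hrs : r < ⌊(1 + δ) * (r : ℝ)⌋) :
    nuMass (BadLoops r ⌊(1 + δ) * (r : ℝ)⌋) ≤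
      ENNReal.ofReal (24 * (⌈8 * (1 + δ) / δ⌉₊ : ℕ) * 8 ^ (80 * ⌈8 * (1 + δ) / δ⌉₊)) := by
  set s := ⌊(1 + δ) * (r : ℝ)⌋ with hs
  set N := ⌈8 * (1 + δ) / δ⌉₊ with hN
  have f1 : (s : ℝ) ≤ (1 + δ) * r := Int.floor_le _
  have f2 : (1 + δ) * (r : ℝ) < s + 1 := Int.lt_floor_add_one _
  have f3 : (r : ℝ) + 1 ≤ s := by exact_mod_cast hrs
  have f4 : (1 : ℝ) ≤ r := by exact_mod_cast hr
  have n1 : 8 * (1 + δ) / δ ≤ N := Nat.le_ceil _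
  rw [div_le_iff₀ hδ] at n1
  have f5 : δ * r ≤ 2 * (s - r) := by linarith
  have key : 4 * (s : ℝ) ≤ N * (s - r) := by
    have g1 : 8 * (1 + δ) * r ≤ N * δ * r := by nlinarith
    have g2 : (N : ℝ) * (δ * r) ≤ N * (2 * (s - r)) :=
      mul_le_mul_of_nonneg_left f5 (Nat.cast_nonneg N)
    nlinarith
  have key' : 4 * s ≤ N * (s - r) := by exact_mod_cast key
  have hNn : (0 : ℤ) ≤ N := Int.natCast_nonneg N
  refine bad_mass (l := (s - r - 1) / 4 + 1) hr hrs (by omega) (by omega) ?_ (by nlinarith)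
  have : s - r ≤ 4 * ((s - r - 1) / 4 + 1) := by omega
  nlinarith

/-- For every `δ > 0` there is `C(δ) > 0` such that for every intensity
`α ∈ (0,1/2]` and all `1 ≤ r < R` with `⌊(1+δ)r⌋ > r`: (i) with probability at least
`C(δ)` no loop frontier of `𝓛^b_R` crosses `A_{r,⌊(1+δ)r⌋}`, and (ii) with probability
at least `C(δ)` no loop of `𝓛_R` crosses `A_{r,⌊(1+δ)r⌋}` without disconnecting `B_r`
from `∂B_{⌊(1+δ)r⌋}`. -/
theorem no_crossing_loop_close_radii :
    ∀ δ : ℝ, 0 < δ →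
    ∃ C : ℝ, 0 < C ∧
      ∀ (α : ℝ) (r R : ℤ) (P : Measure Config),
        0 < α → α ≤ 1 / 2 → 1 ≤ r → r < R → r < ⌊(1 + δ) * (r : ℝ)⌋ →
        IsLoopSoup (box 0 R) α P →
        ENNReal.ofReal C ≤
          P {ω | ∀ γ ∈ Config.loops ω,
              ¬ CrossesAnn (loopFrontier γ) 0 r ⌊(1 + δ) * (r : ℝ)⌋} ∧
        ENNReal.ofReal C ≤
          P {ω | ∀ γ ∈ Config.loops ω,
              ¬ (CrossesAnn (ULoop.trace γ) 0 r ⌊(1 + δ) * (r : ℝ)⌋ ∧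
                ¬ Disconnects (ULoop.trace γ) (embS (box 0 r))
                    (bdryE 0 ⌊(1 + δ) * (r : ℝ)⌋))} := by
  intro δ hδ
  set M : ℝ := 24 * (⌈8 * (1 + δ) / δ⌉₊ : ℕ) * 8 ^ (80 * ⌈8 * (1 + δ) / δ⌉₊) with hM
  have hM0 : 0 ≤ M := by positivity
  refine ⟨Real.exp (-M), Real.exp_pos _, ?_⟩
  intro α r R P hα hα' hr _ hrs hP
  have hv := void_prob hα hα' hP hM0 (params hδ hr hrs)
  refine ⟨hv.trans (measure_mono ?_), hv.trans (measure_mono ?_)⟩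
  · intro ω hω γ hγ hc
    exact hγ (hω γ (bad_of_frontier hr hrs hc))
  · intro ω hω γ hγ hc
    exact hγ (hω γ (bad_of_trace hr hrs hc.1 hc.2))

end RWLSPaper
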